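/- arXiv:0912.3568 — 11 statements merged into one kernel-verified Lean document; each statement's English description precedes it below -/
import Mathlib

section
/- Let q : ℝ → ℝ be locally integrable and let (u, v) be a solution of −u″ + q·u = 0. Then for all x, y ∈ ℝ: (u(y)² + v(y)²)·exp(−∫_{min(x,y)}^{max(x,y)} |1 + q(t)| dt) ≤ u(x)² + v(x)² ≤ (u(y)² + v(y)²)·exp(∫_{min(x,y)}^{max(x,y)} |1 + q(t)| dt). -/
open MeasureTheory

theorem exp_ac_aux {f : ℝ → ℝ} {a b : ℝ} (hf : AbsolutelyContinuousOnInterval f a b) :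
    AbsolutelyContinuousOnInterval (fun x => Real.exp (f x)) a b := by
  obtain ⟨C, hC⟩ := hf.exists_bound
  obtain ⟨K, hK⟩ := (Real.contDiff_exp (n := 1)).contDiffOn (s := Set.Icc (-C) C)
    |>.exists_lipschitzOnWith (by decide) (convex_Icc _ _) isCompact_Icc
  unfold AbsolutelyContinuousOnInterval at hf ⊢
  apply squeeze_zero' ?_ ?_ (by simpa using (hf.const_mul (K : ℝ)))
  · exact Filter.Eventually.of_forall <| fun _ ↦ Finset.sum_nonneg (fun i hi ↦ dist_nonneg)
  rw [Filter.eventually_inf_principal]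
  filter_upwards with (n, I) hnI
  simp only [Finset.mul_sum]
  apply Finset.sum_le_sum
  intro i hi
  have h1 := hC _ (hnI.left i hi).1
  have h2 := hC _ (hnI.left i hi).2
  rw [Real.norm_eq_abs, abs_le] at h1 h2
  exact hK.dist_le_mul _ h1 _ h2

theorem core_aux (q u v : ℝ → ℝ)
    (hq : LocallyIntegrable q volume)
    (hu : ∀ x : ℝ, HasDerivAt u (v x) x)
    (hv : ∀ x y : ℝ, v x = v y + ∫ t in y..x, q t * u t) (a b : ℝ) (hab : a ≤ b) :
    u b ^ 2 + v b ^ 2 ≤ (u a ^ 2 + v a ^ 2) * Real.exp (∫ t in a..b, |1 + q t|) ∧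
    u a ^ 2 + v a ^ 2 ≤ (u b ^ 2 + v b ^ 2) * Real.exp (∫ t in a..b, |1 + q t|) := by
  have huc : Continuous u := continuous_iff_continuousAt.2 fun x => (hu x).continuousAt
  have hqi : ∀ x y, IntervalIntegrable q volume x y := fun x y =>
    intervalIntegrable_iff.mpr <|
      (hq.integrableOn_isCompact isCompact_uIcc).mono_set Set.uIoc_subset_uIcc
  have hqu : ∀ x y, IntervalIntegrable (fun t => q t * u t) volume x y := fun x y =>
    (hqi x y).mul_continuousOn huc.continuousOn
  have hvc : Continuous v := by
    have : v = fun x => v 0 + ∫ t in (0:ℝ)..x, q t * u t := funext fun x => hv x 0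
    rw [this]
    exact continuous_const.add (intervalIntegral.continuous_primitive hqu 0)
  have hA : ∀ x y, IntervalIntegrable (fun t => |1 + q t|) volume x y := fun x y =>
    (intervalIntegrable_const.add (hqi x y)).abs
  have uAC : AbsolutelyContinuousOnInterval u a b := by
    apply ContDiffOn.absolutelyContinuousOnInterval
    apply ContDiff.contDiffOn
    rw [contDiff_one_iff_deriv]
    refine ⟨fun x => (hu x).differentiableAt, ?_⟩
    rw [show deriv u = v from funext fun x => (hu x).deriv]
    exact hvc
  have cAC : ∀ c : ℝ, AbsolutelyContinuousOnInterval (fun _ : ℝ => c) a b := fun c =>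
    contDiff_const.contDiffOn.absolutelyContinuousOnInterval
  have hveq : v = fun x => v a + ∫ t in a..x, q t * u t := funext fun x => hv x a
  have vAC : AbsolutelyContinuousOnInterval v a b := by
    rw [hveq]
    exact (cAC (v a)).add ((hqu a b).absolutelyContinuousOnInterval_intervalIntegral (by simp))
  have AAC : AbsolutelyContinuousOnInterval (fun x => ∫ t in a..x, |1 + q t|) a b :=
    (hA a b).absolutelyContinuousOnInterval_intervalIntegral (by simp)
  have key : ∀ s : ℝ, AbsolutelyContinuousOnInterval
      (fun x => (u x * u x + v x * v x) * Real.exp (s * ∫ t in a..x, |1 + q t|)) a b := fun s =>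
    ((uAC.fun_mul uAC).add (vAC.fun_mul vAC)).fun_mul (exp_ac_aux (AAC.const_mul s))
  have hd : ∀ s : ℝ, ∀ᵐ x, x ∈ Set.uIcc a b → deriv
      (fun x => (u x * u x + v x * v x) * Real.exp (s * ∫ t in a..x, |1 + q t|)) x =
      (2 * u x * v x * (1 + q x) + s * |1 + q x| * (u x * u x + v x * v x)) *
        Real.exp (s * ∫ t in a..x, |1 + q t|) := by
    intro s
    filter_upwards [(hqu a b).ae_hasDerivAt_integral, (hA a b).ae_hasDerivAt_integral]
      with x h1 h2 hx
    have h1' := (h1 hx a (by simp)).const_add (v a)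
    rw [← hveq] at h1'
    have h2' := ((h2 hx a (by simp)).const_mul s).exp
    have := ((((hu x).mul (hu x)).add (h1'.mul h1')).mul h2').deriv
    refine Eq.trans this ?_
    simp only [Pi.add_apply, Pi.mul_apply]
    ring
  have hb : ∀ x, |2 * u x * v x * (1 + q x)| ≤ |1 + q x| * (u x * u x + v x * v x) := by
    intro x
    rw [abs_mul, mul_comm]
    gcongr
    rw [abs_le]
    constructor <;> nlinarith [sq_nonneg (u x + v x), sq_nonneg (u x - v x)]
  have hae : ∀ {P : ℝ → Prop}, (∀ᵐ x, x ∈ Set.uIcc a b → P x) →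
      ∀ᵐ x ∂(volume.restrict (Set.Icc a b)), P x := by
    intro P h
    rw [Set.uIcc_of_le hab] at h
    exact (ae_restrict_iff' measurableSet_Icc).2 h
  have up : 0 ≤ ∫ x in a..b, deriv
      (fun x => (u x * u x + v x * v x) * Real.exp (1 * ∫ t in a..x, |1 + q t|)) x := by
    apply intervalIntegral.integral_nonneg_of_ae_restrict hab
    apply hae
    filter_upwards [hd 1] with x hx hx'
    rw [hx hx']
    have := (abs_le.1 (hb x)).1
    exact mul_nonneg (by linarith) (Real.exp_pos _).le
  have dn : 0 ≤ ∫ x in a..b, -deriv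
      (fun x => (u x * u x + v x * v x) * Real.exp (-1 * ∫ t in a..x, |1 + q t|)) x := by
    apply intervalIntegral.integral_nonneg_of_ae_restrict hab
    apply hae
    filter_upwards [hd (-1)] with x hx hx'
    rw [hx hx', ← neg_mul]
    have := (abs_le.1 (hb x)).2
    exact mul_nonneg (by linarith) (Real.exp_pos _).le
  rw [(key 1).integral_deriv_eq_sub] at up
  rw [intervalIntegral.integral_neg, (key (-1)).integral_deriv_eq_sub] at dn
  simp only [intervalIntegral.integral_same, mul_zero, Real.exp_zero, mul_one, one_mul,
    neg_mul] at up dn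
  constructor
  · have h3 : (u b * u b + v b * v b) * Real.exp (-∫ t in a..b, |1 + q t|) ≤
      u a * u a + v a * v a := by linarith
    rw [Real.exp_neg, ← div_eq_mul_inv, div_le_iff₀ (Real.exp_pos _)] at h3
    simpa only [sq] using h3
  · simp only [sq]
    linarith



/-- A priori bound on solutions of `-u'' + q u = 0`:
`(u(y)² + v(y)²) exp(-∫ |1+q|) ≤ u(x)² + v(x)² ≤ (u(y)² + v(y)²) exp(∫ |1+q|)`. -/
theorem solution_apriori_bound (q u v : ℝ → ℝ)
    (hq : LocallyIntegrable q volume)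
    (hu : ∀ x : ℝ, HasDerivAt u (v x) x)
    (hv : ∀ x y : ℝ, v x = v y + ∫ t in y..x, q t * u t) :
    ∀ x y : ℝ,
      (u y ^ 2 + v y ^ 2) * Real.exp (-∫ t in min x y..max x y, |1 + q t|)
          ≤ u x ^ 2 + v x ^ 2 ∧
      u x ^ 2 + v x ^ 2
          ≤ (u y ^ 2 + v y ^ 2) * Real.exp (∫ t in min x y..max x y, |1 + q t|) := by
  intro x y
  have conv : ∀ A B I : ℝ, A ≤ B * Real.exp I → A * Real.exp (-I) ≤ B := by
    intro A B I h
    rwa [Real.exp_neg, ← div_eq_mul_inv, div_le_iff₀ (Real.exp_pos _)]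
  rcases le_total x y with h | h
  · rw [min_eq_left h, max_eq_right h]
    obtain ⟨h1, h2⟩ := core_aux q u v hq hu hv x y h
    exact ⟨conv _ _ _ h1, h2⟩
  · rw [min_eq_right h, max_eq_left h]
    obtain ⟨h1, h2⟩ := core_aux q u v hq hu hv y x h
    exact ⟨conv _ _ _ h2, h1⟩
end

section
/- For i = 1, 2 let qᵢ : ℝ → ℝ be locally integrable and let (uᵢ, vᵢ) be a solution of −u″ + qᵢ·u = 0. Then for all x, y ∈ ℝ: ((u₁(x) − u₂(x))² + (v₁(x) − v₂(x))²)^{1/2} ≤ ((u₁(y) − u₂(y))² + (v₁(y) − v₂(y))²)^{1/2}·exp(∫_{min(x,y)}^{max(x,y)} (|q₂(t)| + 1) dt) + (u₁(y)² + v₁(y)²)^{1/2}·exp(∫_{min(x,y)}^{max(x,y)} (|q₁(t)| + |q₂(t)| + 2) dt)·∫_{min(x,y)}^{max(x,y)} |q₁(t) − q₂(t)| dt. -/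
open MeasureTheory

lemma aux_exp {k : ℝ → ℝ} {a t : ℝ} (hat : a ≤ t) (hk0 : ∀ s, 0 ≤ k s)
    (hk : LocallyIntegrable k volume) (hki : ∀ a b, IntervalIntegrable k volume a b) :
    ∫ s in a..t, k s * Real.exp (∫ r in a..s, k r) ≤ Real.exp (∫ r in a..t, k r) - 1 := by
  have hmono : Monotone (fun s => Real.exp (∫ r in a..s, k r)) := by
    intro s₁ s₂ h
    apply Real.exp_le_exp.2
    have h1 := intervalIntegral.integral_add_adjacent_intervals (hki a s₁) (hki s₁ s₂)
    have h2 : 0 ≤ ∫ r in s₁..s₂, k r := intervalIntegral.integral_nonneg h (fun u _ => hk0 u)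
    linarith
  have h1 := (hmono.monotoneOn (Set.uIcc a t)).intervalIntegral_deriv_mem_uIcc
  simp only [intervalIntegral.integral_same, Real.exp_zero] at h1
  have h3 : (1:ℝ) ≤ Real.exp (∫ r in a..t, k r) := by
    have := hmono hat
    simpa using this
  rw [Set.uIcc_of_le (by linarith)] at h1
  refine le_trans (le_of_eq ?_) h1.2
  apply intervalIntegral.integral_congr_ae
  filter_upwards [_root_.LocallyIntegrable.ae_hasDerivAt_integral hk] with s hs _
  rw [((hs a).exp).deriv, mul_comm]

lemma aux_gronwall {k f : ℝ → ℝ} {a b A : ℝ} (hab : a ≤ b) (hk0 : ∀ s, 0 ≤ k s)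
    (hk : LocallyIntegrable k volume) (hki : ∀ a b, IntervalIntegrable k volume a b)
    (hf : Continuous f) (hf0 : ∀ t, 0 ≤ f t)
    (h : ∀ t ∈ Set.Icc a b, f t ≤ A + ∫ s in a..t, k s * f s) :
    f b ≤ A * Real.exp (∫ s in a..b, k s) := by
  have hK : Continuous (fun t => ∫ s in a..t, k s) := intervalIntegral.continuous_primitive hki a
  have hc : Continuous (fun t => f t * Real.exp (-∫ s in a..t, k s)) :=
    hf.mul (Real.continuous_exp.comp hK.neg)
  obtain ⟨t₀, ht₀, hmax⟩ := isCompact_Icc.exists_isMaxOn (Set.nonempty_Icc.2 hab) hc.continuousOn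
  set M := f t₀ * Real.exp (-∫ s in a..t₀, k s) with hM
  have hM0 : 0 ≤ M := mul_nonneg (hf0 _) (Real.exp_pos _).le
  have hle : ∀ t ∈ Set.Icc a b, f t ≤ M * Real.exp (∫ s in a..t, k s) := by
    intro t ht
    have h1 : f t * Real.exp (-∫ s in a..t, k s) ≤ M := hmax ht
    rw [Real.exp_neg, ← div_eq_mul_inv, div_le_iff₀ (Real.exp_pos _)] at h1
    exact h1
  have heq : f t₀ = M * Real.exp (∫ s in a..t₀, k s) := by
    rw [hM, mul_assoc, ← Real.exp_add]; simp
  have hint : ∫ s in a..t₀, k s * f s ≤ M * (Real.exp (∫ s in a..t₀, k s) - 1) := by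
    calc ∫ s in a..t₀, k s * f s
        ≤ ∫ s in a..t₀, M * (k s * Real.exp (∫ r in a..s, k r)) := by
          apply intervalIntegral.integral_mono_on ht₀.1
          · exact (hki _ _).mul_continuousOn hf.continuousOn
          · exact ((hki _ _).mul_continuousOn
              (Real.continuous_exp.comp hK).continuousOn).const_mul M
          · intro s hs
            have := mul_le_mul_of_nonneg_left (hle s ⟨hs.1, hs.2.trans ht₀.2⟩) (hk0 s)
            linarith
      _ ≤ _ := by
          rw [intervalIntegral.integral_const_mul]
          exact mul_le_mul_of_nonneg_left (aux_exp ht₀.1 hk0 hk hki) hM0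
  have h2 := h t₀ ht₀
  have hMA : M ≤ A := by rw [heq] at h2; linarith
  exact (hle b ⟨hab, le_rfl⟩).trans (mul_le_mul_of_nonneg_right hMA (Real.exp_pos _).le)

lemma aux_ii {q : ℝ → ℝ} (hq : LocallyIntegrable q volume) (a b : ℝ) :
    IntervalIntegrable q volume a b :=
  intervalIntegrable_iff.mpr <|
    (hq.integrableOn_isCompact isCompact_uIcc).mono_set Set.uIoc_subset_uIcc

lemma aux_li {q : ℝ → ℝ} (hq : ∀ a b, IntervalIntegrable q volume a b) :
    LocallyIntegrable q volume := by
  rw [locallyIntegrable_iff]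
  intro K hK
  obtain ⟨a, b, hab⟩ : ∃ a b, K ⊆ Set.Ioc a b := by
    obtain ⟨r, hr⟩ := hK.isBounded.subset_closedBall 0
    refine ⟨-r - 1, r, fun x hx => ?_⟩
    have := hr hx
    rw [Real.closedBall_eq_Icc] at this
    constructor <;> linarith [this.1, this.2]
  exact ((hq a b).1).mono_set hab

lemma aux_cont {q g u v : ℝ → ℝ} (hq : ∀ a b, IntervalIntegrable q volume a b)
    (hg : ∀ a b, IntervalIntegrable g volume a b) (hu : ∀ x : ℝ, HasDerivAt u (v x) x)
    (hv : ∀ x y : ℝ, v x = v y + ∫ t in y..x, (q t * u t + g t)) : Continuous u ∧ Continuous v := by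
  have huc : Continuous u := continuous_iff_continuousAt.2 fun x => (hu x).continuousAt
  refine ⟨huc, ?_⟩
  have h : Continuous fun x => v 0 + ∫ t in (0:ℝ)..x, (q t * u t + g t) :=
    continuous_const.add (intervalIntegral.continuous_primitive
      (fun a b => ((hq a b).mul_continuousOn huc.continuousOn).add (hg a b)) 0)
  exact h.congr fun x => (hv x 0).symm

lemma aux_fwd {q g u v : ℝ → ℝ} (hq : ∀ a b, IntervalIntegrable q volume a b)
    (hg : ∀ a b, IntervalIntegrable g volume a b) (hu : ∀ x : ℝ, HasDerivAt u (v x) x)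
    (hv : ∀ x y : ℝ, v x = v y + ∫ t in y..x, (q t * u t + g t)) {a b : ℝ} (hab : a ≤ b) :
    Real.sqrt (u b ^ 2 + v b ^ 2) ≤ (Real.sqrt (u a ^ 2 + v a ^ 2) + ∫ t in a..b, |g t|)
      * Real.exp (∫ t in a..b, (|q t| + 1)) := by
  obtain ⟨huc, hvc⟩ := aux_cont hq hg hu hv
  have hki : ∀ a b, IntervalIntegrable (fun t => |q t| + 1) volume a b := fun a b =>
    (hq a b).abs.add intervalIntegrable_const
  have hfc : Continuous (fun t => Real.sqrt (u t ^ 2 + v t ^ 2)) := by fun_prop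
  refine aux_gronwall (f := fun t => Real.sqrt (u t ^ 2 + v t ^ 2)) hab (fun s => by positivity)
    (aux_li hki) hki hfc (fun t => Real.sqrt_nonneg _) ?_
  intro t ht
  have hw : ∀ a b, IntervalIntegrable (fun t => q t * u t + g t) volume a b := fun a b =>
    ((hq a b).mul_continuousOn huc.continuousOn).add (hg a b)
  have hN : ∀ x y : ℝ, Real.sqrt (x ^ 2 + y ^ 2) = ‖(x : ℂ) + y * Complex.I‖ := by
    intro x y; rw [Complex.norm_add_mul_I]
  have hu1 : ∫ s in a..t, v s = u t - u a :=
    intervalIntegral.integral_eq_sub_of_hasDerivAt (fun x _ => hu x) (hvc.intervalIntegrable _ _)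
  have hv1 : ∫ s in a..t, (q s * u s + g s) = v t - v a := by rw [hv t a]; ring
  have hi1 : IntervalIntegrable (fun s => (v s : ℂ)) volume a t :=
    (Complex.continuous_ofReal.comp hvc).intervalIntegrable _ _
  have hi2 : IntervalIntegrable (fun s => ((q s * u s + g s : ℝ) : ℂ)) volume a t :=
    ⟨(hw a t).1.ofReal, (hw a t).2.ofReal⟩
  have hΦ : (u t : ℂ) + v t * Complex.I = ((u a : ℂ) + v a * Complex.I)
      + ∫ s in a..t, ((v s : ℂ) + ((q s * u s + g s : ℝ) : ℂ) * Complex.I) := by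
    rw [intervalIntegral.integral_add hi1 (hi2.mul_const _), intervalIntegral.integral_mul_const,
      intervalIntegral.integral_ofReal, intervalIntegral.integral_ofReal, hu1, hv1]
    push_cast; ring
  have hkf : IntervalIntegrable (fun s => (|q s| + 1) * Real.sqrt (u s ^ 2 + v s ^ 2)) volume a t :=
    (hki a t).mul_continuousOn hfc.continuousOn
  have hbound : ‖∫ s in a..t, ((v s : ℂ) + ((q s * u s + g s : ℝ) : ℂ) * Complex.I)‖
      ≤ ∫ s in a..t, ((|q s| + 1) * Real.sqrt (u s ^ 2 + v s ^ 2) + |g s|) := by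
    apply intervalIntegral.norm_integral_le_of_norm_le ht.1 _ (hkf.add (hg a t).abs)
    refine Filter.Eventually.of_forall fun s _ => ?_
    have e1 : |u s| ≤ Real.sqrt (u s ^ 2 + v s ^ 2) := Real.abs_le_sqrt (by nlinarith [sq_nonneg (v s)])
    have e2 : |v s| ≤ Real.sqrt (u s ^ 2 + v s ^ 2) := Real.abs_le_sqrt (by nlinarith [sq_nonneg (u s)])
    have e3 : |q s * u s + g s| ≤ |q s| * |u s| + |g s| := by
      rw [← abs_mul]; exact abs_add_le _ _
    have e4 := mul_le_mul_of_nonneg_left e1 (abs_nonneg (q s))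
    calc _ ≤ ‖(v s : ℂ)‖ + ‖((q s * u s + g s : ℝ) : ℂ) * Complex.I‖ := norm_add_le _ _
      _ = |v s| + |q s * u s + g s| := by
        rw [norm_mul, Complex.norm_I, mul_one, Complex.norm_real, Complex.norm_real]; rfl
      _ ≤ _ := by linarith
  rw [intervalIntegral.integral_add hkf (hg a t).abs] at hbound
  have hg1 : ∫ s in a..t, |g s| ≤ ∫ s in a..b, |g s| :=
    intervalIntegral.integral_mono_interval le_rfl ht.1 ht.2
      (Filter.Eventually.of_forall fun s => abs_nonneg _) (hg a b).abs
  have := norm_add_le ((u a : ℂ) + v a * Complex.I)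
    (∫ s in a..t, ((v s : ℂ) + ((q s * u s + g s : ℝ) : ℂ) * Complex.I))
  rw [← hΦ, ← hN, ← hN] at this
  show Real.sqrt (u t ^ 2 + v t ^ 2) ≤ _
  linarith

lemma aux_both {q g u v : ℝ → ℝ} (hq : ∀ a b, IntervalIntegrable q volume a b)
    (hg : ∀ a b, IntervalIntegrable g volume a b) (hu : ∀ x : ℝ, HasDerivAt u (v x) x)
    (hv : ∀ x y : ℝ, v x = v y + ∫ t in y..x, (q t * u t + g t)) (x y : ℝ) :
    Real.sqrt (u x ^ 2 + v x ^ 2) ≤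
      (Real.sqrt (u y ^ 2 + v y ^ 2) + ∫ t in min x y..max x y, |g t|)
      * Real.exp (∫ t in min x y..max x y, (|q t| + 1)) := by
  rcases le_total y x with h | h
  · rw [min_eq_right h, max_eq_left h]
    exact aux_fwd hq hg hu hv h
  · rw [min_eq_left h, max_eq_right h]
    have hn : ∀ {p : ℝ → ℝ}, (∀ a b, IntervalIntegrable p volume a b) →
        ∀ a b, IntervalIntegrable (fun t => p (-t)) volume a b := by
      intro p hp a b
      have := (IntervalIntegrable.iff_comp_neg (f := p) (a := -a) (b := -b)).1 (hp _ _)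
      simpa using this
    have key := aux_fwd (u := fun t => u (-t)) (v := fun t => -v (-t)) (hn hq) (hn hg)
      (fun t => by
        have := (hu (-t)).scomp t (hasDerivAt_neg t)
        simpa [Function.comp_def] using this)
      (fun s t => by
        have := intervalIntegral.integral_comp_neg (a := t) (b := s) (fun t => q t * u t + g t)
        rw [this, hv (-t) (-s)]; ring)
      (neg_le_neg h)
    have i1 := intervalIntegral.integral_comp_neg (a := -y) (b := -x) (fun t => |g t|)
    have i2 := intervalIntegral.integral_comp_neg (a := -y) (b := -x) (fun t => |q t| + 1)
    simp only [neg_neg] at i1 i2 key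
    rw [i1, i2] at key
    simpa using key

/-- Continuous dependence of solutions of `-u'' + q u = 0` on the potential `q`. -/
theorem solution_continuous_dependence (q₁ q₂ u₁ v₁ u₂ v₂ : ℝ → ℝ)
    (hq₁ : LocallyIntegrable q₁ volume) (hq₂ : LocallyIntegrable q₂ volume)
    (hu₁ : ∀ x : ℝ, HasDerivAt u₁ (v₁ x) x)
    (hv₁ : ∀ x y : ℝ, v₁ x = v₁ y + ∫ t in y..x, q₁ t * u₁ t)
    (hu₂ : ∀ x : ℝ, HasDerivAt u₂ (v₂ x) x)
    (hv₂ : ∀ x y : ℝ, v₂ x = v₂ y + ∫ t in y..x, q₂ t * u₂ t) :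
    ∀ x y : ℝ,
      Real.sqrt ((u₁ x - u₂ x) ^ 2 + (v₁ x - v₂ x) ^ 2)
        ≤ Real.sqrt ((u₁ y - u₂ y) ^ 2 + (v₁ y - v₂ y) ^ 2)
            * Real.exp (∫ t in min x y..max x y, (|q₂ t| + 1))
          + Real.sqrt (u₁ y ^ 2 + v₁ y ^ 2)
            * Real.exp (∫ t in min x y..max x y, (|q₁ t| + |q₂ t| + 2))
            * ∫ t in min x y..max x y, |q₁ t - q₂ t| := by
  intro x y
  have h1 := aux_ii hq₁
  have h2 := aux_ii hq₂
  have h12 : ∀ a b, IntervalIntegrable (fun t => q₁ t - q₂ t) volume a b := fun a b =>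
    (h1 a b).sub (h2 a b)
  have hz : ∀ a b : ℝ, IntervalIntegrable (fun _ : ℝ => (0:ℝ)) volume a b := fun a b =>
    intervalIntegrable_const
  have hv₁' : ∀ x y : ℝ, v₁ x = v₁ y + ∫ t in y..x, (q₁ t * u₁ t + (fun _ => (0:ℝ)) t) := by
    simpa using hv₁
  have hu₁c := (aux_cont h1 hz hu₁ hv₁').1
  have hu₂c : Continuous u₂ := continuous_iff_continuousAt.2 fun x => (hu₂ x).continuousAt
  have hg : ∀ a b, IntervalIntegrable (fun t => (q₁ t - q₂ t) * u₁ t) volume a b := fun a b =>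
    (h12 a b).mul_continuousOn hu₁c.continuousOn
  have key := aux_both (u := fun t => u₁ t - u₂ t) (v := fun t => v₁ t - v₂ t) h2 hg
    (fun t => (hu₁ t).sub (hu₂ t))
    (fun x y => by
      rw [hv₁ x y, hv₂ x y]
      have e : ∫ t in y..x, (q₂ t * (u₁ t - u₂ t) + (q₁ t - q₂ t) * u₁ t)
          = ∫ t in y..x, (q₁ t * u₁ t - q₂ t * u₂ t) := by
        congr 1; ext t; ring
      rw [e, intervalIntegral.integral_sub ((h1 y x).mul_continuousOn hu₁c.continuousOn)
        ((h2 y x).mul_continuousOn hu₂c.continuousOn)]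
      ring) x y
  have hk1 : ∀ a b, IntervalIntegrable (fun t => |q₁ t| + 1) volume a b := fun a b =>
    (h1 a b).abs.add intervalIntegrable_const
  have hk2 : ∀ a b, IntervalIntegrable (fun t => |q₂ t| + 1) volume a b := fun a b =>
    (h2 a b).abs.add intervalIntegrable_const
  have hmm : min x y ≤ max x y := min_le_max
  set R := Real.sqrt (u₁ y ^ 2 + v₁ y ^ 2) with hR
  have hR0 : 0 ≤ R := Real.sqrt_nonneg _
  set E1 := Real.exp (∫ t in min x y..max x y, (|q₁ t| + 1)) with hE1
  set E2 := Real.exp (∫ t in min x y..max x y, (|q₂ t| + 1)) with hE2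
  have hE : Real.exp (∫ t in min x y..max x y, (|q₁ t| + |q₂ t| + 2)) = E1 * E2 := by
    rw [hE1, hE2, ← Real.exp_add, ← intervalIntegral.integral_add (hk1 _ _) (hk2 _ _)]
    congr 2; ext t; ring
  have hub : ∀ t ∈ Set.Icc (min x y) (max x y), |u₁ t| ≤ R * E1 := by
    intro t ht
    have k1 := aux_both h1 hz hu₁ hv₁' t y
    simp only [abs_zero, intervalIntegral.integral_zero, add_zero] at k1
    have e1 : |u₁ t| ≤ Real.sqrt (u₁ t ^ 2 + v₁ t ^ 2) :=
      Real.abs_le_sqrt (by nlinarith [sq_nonneg (v₁ t)])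
    refine e1.trans (k1.trans (mul_le_mul_of_nonneg_left (Real.exp_le_exp.2 ?_) hR0))
    exact intervalIntegral.integral_mono_interval (le_min ht.1 (min_le_right _ _)) min_le_max
      (max_le ht.2 (le_max_right _ _))
      (Filter.Eventually.of_forall fun s => by positivity) (hk1 _ _)
  have hgi : ∫ t in min x y..max x y, |(q₁ t - q₂ t) * u₁ t|
      ≤ R * E1 * ∫ t in min x y..max x y, |q₁ t - q₂ t| := by
    rw [← intervalIntegral.integral_const_mul]
    apply intervalIntegral.integral_mono_on hmm (hg _ _).abs ((h12 _ _).abs.const_mul _)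
    intro t ht
    rw [abs_mul, mul_comm]
    exact mul_le_mul_of_nonneg_right (hub t ht) (abs_nonneg _)
  refine key.trans ?_
  rw [hE, add_mul]
  have := mul_le_mul_of_nonneg_right hgi (Real.exp_pos (∫ t in min x y..max x y, (|q₂ t| + 1))).le
  rw [← hE2] at this
  linarith
end

section
/- For all positive real numbers ℓ and M there exists a constant C > 0 such that for every c ∈ ℝ, every locally integrable q : ℝ → ℝ with ∫_c^{c+ℓ} |q(t)| dt ≤ M, and every solution (u, v) of −u″ + q·u = 0, one has ∫_c^{c+ℓ} u(t)² dt ≥ C·(u(c)² + v(c)²). -/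
open MeasureTheory

/-- Uniform lower bound on the local `L²` norm of solutions of `-u'' + q u = 0`. -/
theorem solution_L2_lower_bound :
    ∀ ℓ M : ℝ, 0 < ℓ → 0 < M →
      ∃ C : ℝ, 0 < C ∧
        ∀ (c : ℝ) (q u v : ℝ → ℝ),
          LocallyIntegrable q volume →
          (∫ t in c..c + ℓ, |q t|) ≤ M →
          (∀ x : ℝ, HasDerivAt u (v x) x) →
          (∀ x y : ℝ, v x = v y + ∫ t in y..x, q t * u t) →
          C * (u c ^ 2 + v c ^ 2) ≤ ∫ t in c..c + ℓ, u t ^ 2 := by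
  intro ℓ M hl hM
  obtain ⟨K, hK⟩ : ∃ K, K = 2 / ℓ + M := ⟨_, rfl⟩
  have hKl : 2 / ℓ ≤ K := by linarith
  have hK0 : 0 < K := by rw [hK]; positivity
  have hKl2 : 2 ≤ K * ℓ := by rwa [div_le_iff₀ hl] at hKl
  obtain ⟨d, hd⟩ : ∃ d, d = 1 / (2 * K) := ⟨_, rfl⟩
  have hd0 : 0 < d := by rw [hd]; positivity
  have hKd : K * d = 1 / 2 := by rw [hd]; field_simp
  have hdl : 4 * d ≤ ℓ := by
    rw [hd, mul_one_div, div_le_iff₀ (by positivity)]; linarith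
  refine ⟨d / (4 * (1 + K ^ 2)), by positivity, ?_⟩
  intro c q u v hq hqM hu hv
  have huc : Continuous u := continuous_iff_continuousAt.2 fun x => (hu x).continuousAt
  obtain ⟨x0, hx0, hmax⟩ := (isCompact_Icc (a := c) (b := c + ℓ)).exists_isMaxOn
    ⟨c, by simp [hl.le]⟩ huc.abs.continuousOn
  obtain ⟨A, hA⟩ : ∃ A, A = |u x0| := ⟨_, rfl⟩
  have hA0 : 0 ≤ A := by rw [hA]; positivity
  have hle : ∀ x ∈ Set.Icc c (c + ℓ), |u x| ≤ A := by
    intro x hx; rw [hA]; exact hmax hx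
  have hqi : ∀ a b, IntervalIntegrable q volume a b := fun a b =>
    (hq.integrableOn_isCompact isCompact_uIcc).intervalIntegrable
  have hvd : ∀ x ∈ Set.Icc c (c + ℓ), ∀ y ∈ Set.Icc c (c + ℓ), y ≤ x →
      |v x - v y| ≤ A * M := by
    intro x hx y hy hyx
    have h1 : v x - v y = ∫ t in y..x, q t * u t := by rw [hv x y]; ring
    have hi1 : IntervalIntegrable (fun t => q t * u t) volume y x :=
      (hqi y x).mul_continuousOn huc.continuousOn
    rw [h1]
    calc |∫ t in y..x, q t * u t| ≤ ∫ t in y..x, |q t * u t| :=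
          intervalIntegral.abs_integral_le_integral_abs hyx
      _ ≤ ∫ t in y..x, A * |q t| := by
          apply intervalIntegral.integral_mono_on hyx hi1.abs ((hqi y x).abs.const_mul A)
          intro t ht
          rw [abs_mul, mul_comm]
          exact mul_le_mul_of_nonneg_right
            (hle t ⟨hy.1.trans ht.1, ht.2.trans hx.2⟩) (abs_nonneg _)
      _ = A * ∫ t in y..x, |q t| := intervalIntegral.integral_const_mul _ _
      _ ≤ A * ∫ t in c..c + ℓ, |q t| := by
          apply mul_le_mul_of_nonneg_left _ hA0
          apply intervalIntegral.integral_mono_interval hy.1 hyx hx.2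
          · exact Filter.Eventually.of_forall fun t => abs_nonneg _
          · exact (hqi _ _).abs
      _ ≤ A * M := mul_le_mul_of_nonneg_left hqM hA0
  have hcm : c ∈ Set.Icc c (c + ℓ) := ⟨le_rfl, by linarith⟩
  have hcl : c + ℓ ∈ Set.Icc c (c + ℓ) := ⟨by linarith, le_rfl⟩
  obtain ⟨ξ, hξ, hξv⟩ := exists_hasDerivAt_eq_slope u v (show c < c + ℓ by linarith)
    huc.continuousOn (fun x _ => hu x)
  have hvξ : |v ξ| ≤ 2 / ℓ * A := by
    rw [hξv, add_sub_cancel_left, abs_div, abs_of_pos hl, div_mul_eq_mul_div]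
    apply div_le_div_of_nonneg_right _ hl.le
    have := abs_sub (u (c + ℓ)) (u c)
    linarith [hle _ hcm, hle _ hcl]
  have hvK : ∀ x ∈ Set.Icc c (c + ℓ), |v x| ≤ K * A := by
    intro x hx
    have hξ' : ξ ∈ Set.Icc c (c + ℓ) := ⟨hξ.1.le, hξ.2.le⟩
    have h : |v x - v ξ| ≤ A * M := by
      rcases le_total ξ x with h | h
      · exact hvd x hx ξ hξ' h
      · rw [abs_sub_comm]; exact hvd ξ hξ' x hx h
    have := abs_sub_abs_le_abs_sub (v x) (v ξ)
    rw [hK]; linarith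
  have hlip : ∀ x ∈ Set.Icc c (c + ℓ), |u x - u x0| ≤ K * A * |x - x0| := by
    intro x hx
    have := (convex_Icc c (c + ℓ)).norm_image_sub_le_of_norm_hasDerivWithin_le
      (f := u) (f' := v) (C := K * A) (fun y _ => (hu y).hasDerivWithinAt)
      (fun y hy => hvK y hy) hx0 hx
    simpa using this
  obtain ⟨a, ha1, ha2, ha3, ha4⟩ : ∃ a, c ≤ a ∧ a + d ≤ c + ℓ ∧ a ≤ x0 ∧ x0 ≤ a + d := by
    by_cases h : x0 + d ≤ c + ℓ
    · exact ⟨x0, hx0.1, h, le_rfl, by linarith⟩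
    · exact ⟨x0 - d, by linarith, by linarith [hx0.2], by linarith, by linarith⟩
  have hlow : ∀ t ∈ Set.Icc a (a + d), A ^ 2 / 4 ≤ u t ^ 2 := by
    intro t ht
    have h1 := hlip t ⟨ha1.trans ht.1, ht.2.trans ha2⟩
    have h2 : |t - x0| ≤ d := abs_le.2 ⟨by linarith [ht.1], by linarith [ht.2]⟩
    have h3 : K * A * |t - x0| ≤ A / 2 := by
      calc _ ≤ K * A * d := mul_le_mul_of_nonneg_left h2 (by positivity)
        _ = A * (K * d) := by ring
        _ = A / 2 := by rw [hKd]; ring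
    have h4 := abs_sub_abs_le_abs_sub (u x0) (u t)
    rw [abs_sub_comm] at h4
    have h5 : A / 2 ≤ |u t| := by linarith
    rw [← sq_abs (u t)]
    nlinarith
  have hint : d * (A ^ 2 / 4) ≤ ∫ t in c..c + ℓ, u t ^ 2 := by
    have hci : ∀ a b, IntervalIntegrable (fun t => u t ^ 2) volume a b := fun a b =>
      (huc.pow 2).intervalIntegrable a b
    calc d * (A ^ 2 / 4) = ∫ t in a..a + d, A ^ 2 / 4 := by simp; ring
      _ ≤ ∫ t in a..a + d, u t ^ 2 :=
          intervalIntegral.integral_mono_on (by linarith) (by simp) (hci _ _) hlow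
      _ ≤ _ := by
          apply intervalIntegral.integral_mono_interval ha1 (by linarith) ha2
          · exact Filter.Eventually.of_forall fun t => sq_nonneg _
          · exact hci _ _
  have hsum : u c ^ 2 + v c ^ 2 ≤ (1 + K ^ 2) * A ^ 2 := by
    have h1 := pow_le_pow_left₀ (abs_nonneg _) (hle c hcm) 2
    have h2 := pow_le_pow_left₀ (abs_nonneg _) (hvK c hcm) 2
    rw [sq_abs] at h1 h2
    nlinarith
  calc _ ≤ d / (4 * (1 + K ^ 2)) * ((1 + K ^ 2) * A ^ 2) :=
        mul_le_mul_of_nonneg_left hsum (by positivity)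
    _ = d * (A ^ 2 / 4) := by field_simp
    _ ≤ _ := hint
end

section
/- Let q : ℝ → ℝ be locally integrable, let (u, v) be a solution of −u″ + q·u = 0 with (u(x), v(x)) ≠ (0, 0) for all x, and let (R, φ) be Prüfer variables for (u, v). Then at every point x at which v is differentiable with v′(x) = q(x)·u(x), the functions φ and R are differentiable at x and satisfy φ′(x) = 1 − (1 + q(x))·sin²(φ(x)) and (R²)′(x)/R(x)² = (1 + q(x))·sin(2·φ(x)). -/
open MeasureTheory

/-- The Prüfer differential equations: wherever `v' = q u`, the Prüfer phase satisfies
`φ' = 1 - (1+q) sin² φ` and the Prüfer amplitude satisfies `(R²)' / R² = (1+q) sin(2φ)`. -/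
theorem prufer_odes (q u v R φ : ℝ → ℝ)
    (hq : LocallyIntegrable q volume)
    (hu : ∀ x : ℝ, HasDerivAt u (v x) x)
    (hv : ∀ x y : ℝ, v x = v y + ∫ t in y..x, q t * u t)
    (hne : ∀ x : ℝ, (u x, v x) ≠ (0, 0))
    (hR : ∀ x : ℝ, 0 < R x)
    (hφ : Continuous φ)
    (huR : ∀ x : ℝ, u x = R x * Real.sin (φ x))
    (hvR : ∀ x : ℝ, v x = R x * Real.cos (φ x)) :
    ∀ x : ℝ, HasDerivAt v (q x * u x) x →
      HasDerivAt φ (1 - (1 + q x) * Real.sin (φ x) ^ 2) x ∧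
      DifferentiableAt ℝ R x ∧
      HasDerivAt (fun t => R t ^ 2) ((1 + q x) * Real.sin (2 * φ x) * R x ^ 2) x := by
  intro x hvx
  have hR2 : ∀ t, R t ^ 2 = u t ^ 2 + v t ^ 2 := by
    intro t
    rw [huR, hvR]
    linear_combination (-(R t ^ 2)) * Real.sin_sq_add_cos_sq (φ t)
  have hsq : HasDerivAt (fun t => R t ^ 2)
      ((1 + q x) * Real.sin (2 * φ x) * R x ^ 2) x := by
    have h := ((hu x).pow 2).add (hvx.pow 2)
    have e : (fun t => R t ^ 2) = u ^ 2 + v ^ 2 := by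
      funext t
      simpa using hR2 t
    rw [e]
    refine h.congr_deriv ?_
    rw [huR x, hvR x, Real.sin_two_mul]
    push_cast
    ring
  have hRd : DifferentiableAt ℝ R x := by
    have e : R = fun t => Real.sqrt (R t ^ 2) := by
      funext t
      exact (Real.sqrt_sq (hR t).le).symm
    rw [e]
    exact hsq.differentiableAt.sqrt (pow_pos (hR x) 2).ne'
  refine ⟨?_, hRd, hsq⟩
  have hRx := (hR x).ne'
  have hw : HasDerivAt (fun t => (u t * Real.cos (φ x) - v t * Real.sin (φ x)) / R t)
      (1 - (1 + q x) * Real.sin (φ x) ^ 2) x := by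
    have h := (((hu x).mul_const (Real.cos (φ x))).sub
      (hvx.mul_const (Real.sin (φ x)))).div hRd.hasDerivAt hRx
    refine h.congr_deriv ?_
    simp only [Pi.sub_apply]
    rw [huR x, hvR x]
    field_simp
    linear_combination R x * Real.sin_sq_add_cos_sq (φ x)
  have hws : (fun t => (u t * Real.cos (φ x) - v t * Real.sin (φ x)) / R t)
      = fun t => Real.sin (φ t - φ x) := by
    funext t
    have := (hR t).ne'
    rw [huR t, hvR t, Real.sin_sub]
    field_simp
  rw [hws] at hw
  have ha : HasDerivAt Real.arcsin 1 (Real.sin (φ x - φ x)) := by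
    have h := Real.hasDerivAt_arcsin (x := 0) (by norm_num) (by norm_num)
    simpa using h
  have hc := (HasDerivAt.comp x ha hw).const_add (φ x)
  rw [one_mul] at hc
  refine hc.congr_of_eventuallyEq ?_
  have hpi := Real.pi_pos
  filter_upwards [hφ.continuousAt.eventually
    (Metric.ball_mem_nhds (φ x) (half_pos hpi))] with t ht
  have ht' : |φ t - φ x| < Real.pi / 2 := by
    simpa [Real.dist_eq] using ht
  rw [abs_lt] at ht'
  simp only [Function.comp]
  rw [Real.arcsin_sin (by linarith [ht'.1]) ht'.2.le]
  ring
end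

section
/- Let q : ℝ → ℝ be locally integrable and let c ∈ ℝ. Suppose that for each θ ∈ ℝ, (u(·,θ), v(·,θ)) is a solution of −u″ + q·u = 0 with u(c,θ) = sin θ and v(c,θ) = cos θ, and that R : ℝ×ℝ → (0,∞) and φ : ℝ×ℝ → ℝ satisfy u(x,θ) = R(x,θ)·sin(φ(x,θ)), v(x,θ) = R(x,θ)·cos(φ(x,θ)) and φ(c,θ) = θ for all x, θ, with φ jointly continuous. Then for every fixed x ∈ ℝ, the function θ ↦ φ(x,θ) is differentiable on ℝ with derivative ∂φ/∂θ(x,θ) = 1/R(x,θ)². -/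
open MeasureTheory


lemma pw_aux (q : ℝ → ℝ) (hq : LocallyIntegrable q volume) (u v : ℝ → ℝ)
    (hu : ∀ x, HasDerivAt u (v x) x)
    (hv : ∀ x y, v x = v y + ∫ t in y..x, q t * u t) (a b : ℝ) :
    AbsolutelyContinuousOnInterval u a b ∧ AbsolutelyContinuousOnInterval v a b ∧
      ∀ᵐ x, x ∈ Set.uIcc a b → HasDerivAt v (q x * u x) x := by
  have huc : Continuous u := continuous_iff_continuousAt.2 fun x => (hu x).continuousAt
  have hint : ∀ a b, IntervalIntegrable (fun t => q t * u t) volume a b := fun a b =>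
    (intervalIntegrable_iff.mpr <| (hq.integrableOn_isCompact isCompact_uIcc).mono_set
      Set.uIoc_subset_uIcc).mul_continuousOn huc.continuousOn
  have hveq : v = fun x => v a + ∫ t in a..x, q t * u t := funext fun x => hv x a
  have hvc : Continuous v := by
    rw [hveq]
    exact continuous_const.add (intervalIntegral.continuous_primitive hint a)
  have hd : deriv u = v := funext fun x => (hu x).deriv
  have hC : ContDiff ℝ 1 u := by
    rw [contDiff_one_iff_deriv, hd]
    exact ⟨fun x => (hu x).differentiableAt, hvc⟩
  refine ⟨hC.contDiffOn.absolutelyContinuousOnInterval, ?_, ?_⟩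
  · have h1 : AbsolutelyContinuousOnInterval (fun _ : ℝ => v a) a b :=
      (contDiff_const (n := 1) (𝕜 := ℝ)).contDiffOn.absolutelyContinuousOnInterval
    have h2 := (hint a b).absolutelyContinuousOnInterval_intervalIntegral (c := a) (by simp)
    rw [hveq]
    exact h1.add h2
  · filter_upwards [(hint a b).ae_hasDerivAt_integral] with x hx hxm
    rw [hveq]
    exact (hx hxm a (by simp)).const_add _

lemma pw_wronskian (q : ℝ → ℝ) (hq : LocallyIntegrable q volume) (u v w z : ℝ → ℝ)
    (hu : ∀ x, HasDerivAt u (v x) x)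
    (hv : ∀ x y, v x = v y + ∫ t in y..x, q t * u t)
    (hw : ∀ x, HasDerivAt w (z x) x)
    (hz : ∀ x y, z x = z y + ∫ t in y..x, q t * w t) (a b : ℝ) :
    u b * z b - w b * v b = u a * z a - w a * v a := by
  obtain ⟨h1, h2, h3⟩ := pw_aux q hq u v hu hv a b
  obtain ⟨k1, k2, k3⟩ := pw_aux q hq w z hw hz a b
  have hac := (h1.fun_mul k2).sub (k1.fun_mul h2)
  obtain ⟨C, hC⟩ := hac.const_of_ae_hasDerivAt_zero (by
    filter_upwards [h3, k3] with x hx kx hm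
    have := ((hu x).fun_mul (kx hm)).sub ((hw x).fun_mul (hx hm))
    convert this using 1
    ring)
  have e1 := hC b (by simp)
  have e2 := hC a (by simp)
  simp only [Pi.sub_apply] at e1 e2
  linarith

/-- Derivative of the Prüfer phase with respect to the initial phase `θ`:
`∂φ/∂θ(x,θ) = 1 / R(x,θ)²`. -/
theorem prufer_phase_deriv_initial_phase (q : ℝ → ℝ) (c : ℝ)
    (hq : LocallyIntegrable q volume)
    (u v R φ : ℝ → ℝ → ℝ)
    (hu : ∀ (θ : ℝ) (x : ℝ), HasDerivAt (fun s => u s θ) (v x θ) x)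
    (hv : ∀ (θ : ℝ) (x y : ℝ), v x θ = v y θ + ∫ t in y..x, q t * u t θ)
    (hu0 : ∀ θ : ℝ, u c θ = Real.sin θ)
    (hv0 : ∀ θ : ℝ, v c θ = Real.cos θ)
    (hR : ∀ x θ : ℝ, 0 < R x θ)
    (huR : ∀ x θ : ℝ, u x θ = R x θ * Real.sin (φ x θ))
    (hvR : ∀ x θ : ℝ, v x θ = R x θ * Real.cos (φ x θ))
    (hφ0 : ∀ θ : ℝ, φ c θ = θ)
    (hφcont : Continuous fun p : ℝ × ℝ => φ p.1 p.2) :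
    ∀ x θ : ℝ, HasDerivAt (fun s => φ x s) (1 / R x θ ^ 2) θ := by
  intro x θ
  have W : ∀ s t, u x s * v x t - u x t * v x s = Real.sin (s - t) := fun s t => by
    rw [pw_wronskian q hq (fun y => u y s) (fun y => v y s) (fun y => u y t) (fun y => v y t)
      (hu s) (hv s) (hu t) (hv t) c x, hu0, hv0, hu0, hv0, Real.sin_sub]
    ring
  have d01 : u x (Real.pi / 2) * v x 0 - u x 0 * v x (Real.pi / 2) = 1 := by
    rw [W]; simp
  have hus : ∀ s, u x s = Real.sin s * u x (Real.pi / 2) + Real.cos s * u x 0 := fun s => by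
    have a := W s 0
    have b := W s (Real.pi / 2)
    rw [sub_zero] at a
    rw [Real.sin_sub_pi_div_two] at b
    linear_combination -(u x s) * d01 + u x (Real.pi / 2) * a - u x 0 * b
  have hvs : ∀ s, v x s = Real.sin s * v x (Real.pi / 2) + Real.cos s * v x 0 := fun s => by
    have a := W s 0
    have b := W s (Real.pi / 2)
    rw [sub_zero] at a
    rw [Real.sin_sub_pi_div_two] at b
    linear_combination -(v x s) * d01 + v x (Real.pi / 2) * a - v x 0 * b
  have hRs : ∀ s, R x s = Real.sqrt (u x s ^ 2 + v x s ^ 2) := fun s => by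
    rw [huR, hvR, eq_comm, Real.sqrt_eq_iff_mul_self_eq (by positivity) (hR x s).le]
    linear_combination (R x s) ^ 2 * Real.sin_sq_add_cos_sq (φ x s)
  have hRc : Continuous fun s => R x s := by
    have hcu : Continuous fun s => u x s := by
      rw [funext hus]; fun_prop
    have hcv : Continuous fun s => v x s := by
      rw [funext hvs]; fun_prop
    rw [funext hRs]
    fun_prop
  have key : ∀ s, Real.sin (φ x s - φ x θ) = Real.sin (s - θ) / (R x s * R x θ) := fun s => by
    have := W s θ
    rw [huR, hvR, huR, hvR] at this
    rw [eq_div_iff (mul_pos (hR x s) (hR x θ)).ne', ← this, Real.sin_sub]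
    ring
  have hsl : HasDerivAt (fun s => Real.sin (s - θ)) 1 θ := by
    have := ((hasDerivAt_id θ).sub_const θ).sin
    simpa using this
  have hg : HasDerivAt (fun s => Real.sin (s - θ) / (R x s * R x θ)) (1 / R x θ ^ 2) θ := by
    rw [hasDerivAt_iff_tendsto_slope] at hsl ⊢
    have hc : Filter.Tendsto (fun s => R x s * R x θ) (nhdsWithin θ {θ}ᶜ)
        (nhds (R x θ * R x θ)) :=
      ((hRc.mul continuous_const).tendsto θ).mono_left nhdsWithin_le_nhds
    have := hsl.div hc (mul_pos (hR x θ) (hR x θ)).ne'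
    rw [pow_two]
    refine this.congr fun s => ?_
    simp only [Pi.div_apply, slope_def_field, sub_self, Real.sin_zero, zero_div, sub_zero]
    rw [div_right_comm]
  have hφx : Continuous fun s => φ x s - φ x θ :=
    (hφcont.comp (Continuous.prodMk_right x)).sub continuous_const
  have hnear : ∀ᶠ s in nhds θ, φ x s = φ x θ +
      Real.arcsin (Real.sin (s - θ) / (R x s * R x θ)) := by
    have h0 : Set.Ioo (-(Real.pi / 2)) (Real.pi / 2) ∈ nhds (φ x θ - φ x θ) := by
      rw [sub_self]
      exact Ioo_mem_nhds (by linarith [Real.pi_pos]) (by linarith [Real.pi_pos])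
    filter_upwards [(hφx.tendsto θ).eventually h0] with s hs
    rw [← key, Real.arcsin_sin hs.1.le hs.2.le]
    ring
  have hval : Real.sin (θ - θ) / (R x θ * R x θ) = 0 := by simp
  have harc : HasDerivAt Real.arcsin 1 (Real.sin (θ - θ) / (R x θ * R x θ)) := by
    rw [hval]
    simpa using Real.hasDerivAt_arcsin (x := 0) (by norm_num) (by norm_num)
  have := (harc.comp θ hg).const_add (φ x θ)
  rw [one_mul] at this
  exact this.congr_of_eventuallyEq hnear
end

section
/- Let W, V : ℝ → ℝ be locally integrable and let c, θ ∈ ℝ. Suppose that for each λ ∈ ℝ, (u(·,λ), v(·,λ)) is a solution of −u″ + (W + λ·V)·u = 0 with u(c,λ) = sin θ and v(c,λ) = cos θ. Then for every fixed x ∈ ℝ there exist entire functions F, G : ℂ → ℂ such that F(λ) = u(x,λ) and G(λ) = v(x,λ) for all real λ; in particular λ ↦ u(x,λ) and λ ↦ v(x,λ) are real-analytic on ℝ. -/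
open MeasureTheory

abbrev II := Set.Icc (0:ℝ) 1

lemma pow_int (k : ℝ → ℝ) (hk : IntervalIntegrable k volume 0 1) (n : ℕ) (t : ℝ) (ht : t ∈ Set.Icc (0:ℝ) 1) :
    IntervalIntegrable (fun s => k s * (∫ r in (0:ℝ)..s, k r) ^ n) volume 0 t ∧
    ∫ s in (0:ℝ)..t, k s * (∫ r in (0:ℝ)..s, k r) ^ n = (∫ r in (0:ℝ)..t, k r) ^ (n+1) / (n+1) := by
  have hk' : IntervalIntegrable k volume 0 t :=
    hk.mono_set (by rw [Set.uIcc_of_le ht.1, Set.uIcc_of_le zero_le_one]; exact Set.Icc_subset_Icc_right ht.2)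
  have hac : AbsolutelyContinuousOnInterval (fun x => ∫ r in (0:ℝ)..x, k r) 0 t :=
    hk'.absolutelyContinuousOnInterval_intervalIntegral (by simp)
  have hacp : ∀ m : ℕ, AbsolutelyContinuousOnInterval (fun x => (∫ r in (0:ℝ)..x, k r) ^ (m+1)) 0 t := by
    intro m
    induction m with
    | zero => simpa using hac
    | succ m ih => 
      have := ih.fun_mul hac
      simpa [pow_succ] using this
  have hd := hk'.ae_hasDerivAt_integral
  have h2 := (hacp n).integral_deriv_eq_sub
  refine ⟨hk'.mul_continuousOn (hac.continuousOn.pow n), ?_⟩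
  have h3 : ∫ s in (0:ℝ)..t, deriv (fun x => (∫ r in (0:ℝ)..x, k r) ^ (n+1)) s
     = ∫ s in (0:ℝ)..t, (n+1) * (k s * (∫ r in (0:ℝ)..s, k r) ^ n) := by
    apply intervalIntegral.integral_congr_ae
    filter_upwards [hd] with x hx hx2
    have := ((hx (Set.uIoc_subset_uIcc hx2) 0 (by simp)).pow (n+1)).deriv
    change deriv (fun x => (∫ r in (0:ℝ)..x, k r) ^ (n+1)) x = _ at this
    rw [this]
    push_cast
    ring
  rw [h3, intervalIntegral.integral_const_mul] at h2
  simp at h2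
  have : (n:ℝ)+1 ≠ 0 := by positivity
  rw [eq_div_iff this, ← h2]; ring

lemma mul_ext_int {q : ℝ → ℂ} (hq : IntervalIntegrable q volume 0 1) (f : C(II, ℂ)) :
    IntervalIntegrable (fun s => q s * Set.IccExtend zero_le_one f s) volume 0 1 :=
  hq.mul_continuousOn (f.continuous.Icc_extend' ).continuousOn

lemma ii_sub {E : Type*} [NormedAddCommGroup E] {q : ℝ → E} (hq : IntervalIntegrable q volume 0 1) {t : ℝ} (ht : t ∈ Set.Icc (0:ℝ) 1) :
   IntervalIntegrable q volume 0 t := 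
    hq.mono_set (by rw [Set.uIcc_of_le ht.1, Set.uIcc_of_le zero_le_one]; exact Set.Icc_subset_Icc_right ht.2)

noncomputable def volt (q : ℝ → ℂ) (hq : IntervalIntegrable q volume 0 1) :
    C(II, ℂ) →L[ℂ] C(II, ℂ) :=
  LinearMap.mkContinuous
    { toFun := fun f => ⟨fun t => ∫ s in (0:ℝ)..t, q s * Set.IccExtend zero_le_one f s, by
        have := intervalIntegral.continuousOn_primitive_interval' (mul_ext_int hq f) (a := 0) (by simp)
        rw [Set.uIcc_of_le zero_le_one] at this
        exact continuousOn_iff_continuous_domRestrict.1 this⟩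
      map_add' := by
        intro f g
        ext t
        change (∫ s in (0:ℝ)..t, q s * Set.IccExtend zero_le_one (f + g) s) = (∫ s in (0:ℝ)..t, q s * Set.IccExtend zero_le_one f s) + (∫ s in (0:ℝ)..t, q s * Set.IccExtend zero_le_one g s)
        rw [← intervalIntegral.integral_add (ii_sub (mul_ext_int hq f) t.2) (ii_sub (mul_ext_int hq g) t.2)]
        congr 1; ext s
        simp [Set.IccExtend, mul_add]
      map_smul' := by
        intro a f
        ext t
        change (∫ s in (0:ℝ)..t, q s * Set.IccExtend zero_le_one (a • f) s) = a * (∫ s in (0:ℝ)..t, q s * Set.IccExtend zero_le_one f s)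
        rw [← intervalIntegral.integral_const_mul]
        congr 1; ext s
        simp [Set.IccExtend]; ring } (∫ s in (0:ℝ)..1, ‖q s‖) (by
    intro f
    have hn : 0 ≤ ∫ s in (0:ℝ)..1, ‖q s‖ :=
      intervalIntegral.integral_nonneg zero_le_one (fun _ _ => norm_nonneg _)
    rw [ContinuousMap.norm_le _ (by positivity)]
    intro t
    change ‖∫ s in (0:ℝ)..t, q s * Set.IccExtend zero_le_one f s‖ ≤ _
    calc _ ≤ ∫ s in (0:ℝ)..t, ‖q s‖ * ‖f‖ := by
            apply intervalIntegral.norm_integral_le_of_norm_le t.2.1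
            · refine Filter.Eventually.of_forall fun s _ => ?_
              rw [norm_mul]
              gcongr
              exact f.norm_coe_le_norm _
            · exact (ii_sub hq t.2).norm.mul_const _
      _ = (∫ s in (0:ℝ)..t, ‖q s‖) * ‖f‖ := intervalIntegral.integral_mul_const _ _
      _ ≤ _ := by
            gcongr
            exact intervalIntegral.integral_mono_interval le_rfl t.2.1 t.2.2 
              (Filter.Eventually.of_forall fun _ => norm_nonneg _) hq.norm)

lemma volt_apply (q : ℝ → ℂ) (hq : IntervalIntegrable q volume 0 1) (f : C(II, ℂ)) (t : II) :
    volt q hq f t = ∫ s in (0:ℝ)..t, q s * Set.IccExtend zero_le_one f s := rfl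

lemma volt_bound {q : ℝ → ℂ} (hq : IntervalIntegrable q volume 0 1) {k : ℝ → ℝ} (hk : IntervalIntegrable k volume 0 1)
    (hqk : ∀ s, ‖q s‖ ≤ k s) (f : C(II, ℂ)) (M : ℝ) (n : ℕ)
    (hf : ∀ t : II, ‖f t‖ ≤ M * (∫ r in (0:ℝ)..t, k r) ^ n / n.factorial) (t : II) :
    ‖volt q hq f t‖ ≤ M * (∫ r in (0:ℝ)..t, k r) ^ (n+1) / (n+1).factorial := by
  rw [volt_apply]
  obtain ⟨h1, h2⟩ := pow_int k hk n t t.2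
  calc _ ≤ ∫ s in (0:ℝ)..t, (M / n.factorial) * (k s * (∫ r in (0:ℝ)..s, k r) ^ n) := by
        apply intervalIntegral.norm_integral_le_of_norm_le t.2.1
        · refine Filter.Eventually.of_forall fun s hs => ?_
          have hs' : s ∈ Set.Icc (0:ℝ) 1 := ⟨hs.1.le, hs.2.trans t.2.2⟩
          rw [norm_mul, Set.IccExtend_of_mem _ _ hs']
          calc _ ≤ k s * (M * (∫ r in (0:ℝ)..s, k r) ^ n / n.factorial) :=
                mul_le_mul (hqk s) (hf ⟨s, hs'⟩) (norm_nonneg _) ((norm_nonneg _).trans (hqk s))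
            _ = _ := by ring
        · exact h1.const_mul _
    _ = _ := by
        rw [intervalIntegral.integral_const_mul, h2, Nat.factorial_succ]
        push_cast
        have := Nat.factorial_ne_zero n
        field_simp

lemma unit_of_norm {E : Type*} [NormedAddCommGroup E] [NormedSpace ℂ E] [CompleteSpace E]
    (T : E →L[ℂ] E) (n : ℕ) (h : ‖T^n‖ < 1) : IsUnit (1 - T) := by
  have hu : IsUnit (1 - T^n) := isUnit_one_sub_of_norm_lt_one h
  rw [← mul_neg_geom_sum] at hu
  refine ((Commute.isUnit_mul_iff ?_).1 hu).1
  rw [commute_iff_eq, mul_neg_geom_sum, geom_sum_mul_neg]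

lemma resolvent_diff {E : Type*} [NormedAddCommGroup E] [NormedSpace ℂ E] [CompleteSpace E]
    (P R : E →L[ℂ] E) (X : E) (h : ∀ l : ℂ, IsUnit (1 - (P + l • R))) :
    Differentiable ℂ (fun l : ℂ => Ring.inverse (1 - (P + l • R)) X) := by
  intro l
  have hTd : Differentiable ℂ (fun l : ℂ => 1 - (P + l • R)) := by fun_prop
  have h1 : DifferentiableAt ℂ (fun l : ℂ => Ring.inverse (1 - (P + l • R))) l :=
    DifferentiableAt.comp (g := Ring.inverse) l (differentiableAt_inverse (h l)) (hTd l)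
  exact h1.clm_apply (differentiableAt_const _)

noncomputable def sysOp (A B : C(II, ℂ) →L[ℂ] C(II, ℂ)) : (C(II, ℂ) × C(II, ℂ)) →L[ℂ] (C(II, ℂ) × C(II, ℂ)) :=
  (A.comp (ContinuousLinearMap.snd ℂ _ _)).prod (B.comp (ContinuousLinearMap.fst ℂ _ _))

lemma sys_unit {q₁ q₂ : ℝ → ℂ} (h₁ : IntervalIntegrable q₁ volume 0 1) (h₂ : IntervalIntegrable q₂ volume 0 1) :
    IsUnit (1 - sysOp (volt q₁ h₁) (volt q₂ h₂)) := by
  set T := sysOp (volt q₁ h₁) (volt q₂ h₂) with hT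
  set k : ℝ → ℝ := fun s => ‖q₁ s‖ + ‖q₂ s‖ with hkdef
  have hk : IntervalIntegrable k volume 0 1 := h₁.norm.add h₂.norm
  have key : ∀ (n : ℕ) (X : C(II, ℂ) × C(II, ℂ)) (t : II), 
     ‖((T^n) X).1 t‖ ≤ ‖X‖ * (∫ r in (0:ℝ)..t, k r) ^ n / n.factorial ∧ 
     ‖((T^n) X).2 t‖ ≤ ‖X‖ * (∫ r in (0:ℝ)..t, k r) ^ n / n.factorial := by
    intro n X
    induction n with
    | zero => 
      intro t
      simp
      exact ⟨(X.1.norm_coe_le_norm t).trans (norm_fst_le X), (X.2.norm_coe_le_norm t).trans (norm_snd_le X)⟩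
    | succ n ih =>
      intro t
      rw [pow_succ']
      exact ⟨volt_bound h₁ hk (fun s => by simp [k]) _ _ n (fun t => (ih t).2) t, 
        volt_bound h₂ hk (fun s => by simp [k]) _ _ n (fun t => (ih t).1) t⟩
  set K := ∫ r in (0:ℝ)..1, k r with hK
  have hk0 : ∀ s, 0 ≤ k s := fun s => by positivity
  have hKn : 0 ≤ K := intervalIntegral.integral_nonneg zero_le_one (fun _ _ => hk0 _)
  have hnorm : ∀ n, ‖T^n‖ ≤ K^n / n.factorial := by
    intro n
    apply ContinuousLinearMap.opNorm_le_bound _ (by positivity)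
    intro X
    have hb : ∀ t : II, ‖X‖ * (∫ r in (0:ℝ)..t, k r) ^ n / n.factorial ≤ K^n / n.factorial * ‖X‖ := by
      intro t
      have h0 : 0 ≤ ∫ r in (0:ℝ)..t, k r := intervalIntegral.integral_nonneg t.2.1 (fun _ _ => hk0 _)
      have h1 : ∫ r in (0:ℝ)..t, k r ≤ K := 
        intervalIntegral.integral_mono_interval le_rfl t.2.1 t.2.2 
              (Filter.Eventually.of_forall fun _ => hk0 _) hk
      calc _ ≤ ‖X‖ * K ^ n / n.factorial := by gcongr
        _ = _ := by ring
    rw [Prod.norm_def]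
    apply max_le
    · rw [ContinuousMap.norm_le _ (by positivity)]
      exact fun t => (key n X t).1.trans (hb t)
    · rw [ContinuousMap.norm_le _ (by positivity)]
      exact fun t => (key n X t).2.trans (hb t)
  obtain ⟨n, hn⟩ := ((FloorSemiring.tendsto_pow_div_factorial_atTop K).eventually_lt_const zero_lt_one).exists
  exact unit_of_norm T n ((hnorm n).trans_lt hn)

lemma core (d α β : ℂ) (p r : ℝ → ℂ) (hp : IntervalIntegrable p volume 0 1) (hr : IntervalIntegrable r volume 0 1)
    (w z : ℝ → ℝ → ℂ) (hwc : ∀ l, Continuous (w l)) (hzc : ∀ l, Continuous (z l))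
    (hw : ∀ l : ℝ, ∀ t ∈ Set.Icc (0:ℝ) 1, w l t = α + ∫ s in (0:ℝ)..t, d * z l s)
    (hz : ∀ l : ℝ, ∀ t ∈ Set.Icc (0:ℝ) 1, z l t = β + ∫ s in (0:ℝ)..t, (p s + l * r s) * w l s) :
    ∃ F G : ℂ → ℂ, Differentiable ℂ F ∧ Differentiable ℂ G ∧ 
      ∀ l : ℝ, F l = w l 1 ∧ G l = z l 1 := by
  have hd : IntervalIntegrable (fun _ : ℝ => d) volume 0 1 := intervalIntegrable_const
  have hpr : ∀ l : ℂ, IntervalIntegrable (fun s => p s + l * r s) volume 0 1 := fun l => hp.add (hr.const_mul l)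
  set T : ℂ → _ := fun l => sysOp (volt _ hd) (volt _ (hpr l)) with hT
  have hTa : ∀ l, T l = sysOp (volt _ hd) (volt p hp) + l • sysOp 0 (volt r hr) := by
    intro l
    refine ContinuousLinearMap.ext fun X => ?_
    ext t
    · simp [T, sysOp]
    · simp only [T, sysOp, volt_apply, ContinuousLinearMap.prod_apply, _root_.add_apply,
        _root_.smul_apply, Prod.snd_add, Prod.smul_snd, ContinuousMap.add_apply, ContinuousMap.smul_apply, ContinuousLinearMap.comp_apply, smul_eq_mul]
      rw [← intervalIntegral.integral_const_mul, ← intervalIntegral.integral_add (ii_sub (mul_ext_int hp _) t.2) ((ii_sub (mul_ext_int hr _) t.2).const_mul _)]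
      congr 1; ext s; ring
  set X0 : C(II, ℂ) × C(II, ℂ) := (ContinuousMap.const _ α, ContinuousMap.const _ β)
  set U : ℂ → C(II, ℂ) × C(II, ℂ) := fun l => Ring.inverse (1 - T l) X0 with hU
  have hUd : Differentiable ℂ U := by
    have := resolvent_diff (sysOp (volt _ hd) (volt p hp)) (sysOp 0 (volt r hr)) X0 
      (fun l => by rw [← hTa]; exact sys_unit hd (hpr l))
    simpa only [← hTa] using this
  let e : C(II, ℂ) →L[ℂ] ℂ := ContinuousMap.evalCLM ℂ (1 : II)
  refine ⟨fun l => e (U l).1, fun l => e (U l).2, ?_, ?_, ?_⟩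
  · exact e.differentiable.comp hUd.fst
  · exact e.differentiable.comp hUd.snd
  intro l
  let Y : C(II, ℂ) × C(II, ℂ) := (⟨fun t => w l t, (hwc l).comp continuous_subtype_val⟩, ⟨fun t => z l t, (hzc l).comp continuous_subtype_val⟩)
  have hext : ∀ (g : ℝ → ℂ) (q : ℝ → ℂ) (t : II), ∫ s in (0:ℝ)..t, q s * Set.IccExtend (zero_le_one (α := ℝ)) (fun t : II => g t) s = ∫ s in (0:ℝ)..t, q s * g s := by
    intro g q t
    apply intervalIntegral.integral_congr
    intro s hs
    rw [Set.uIcc_of_le t.2.1] at hs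
    have hs' : s ∈ Set.Icc (0:ℝ) 1 := ⟨hs.1, hs.2.trans t.2.2⟩
    simp only []
    rw [Set.IccExtend_of_mem _ _ hs']
  have hY : (1 - T l) Y = X0 := by
    ext t
    · have := hw l t t.2
      simp only [T, sysOp, Y, X0, _root_.sub_apply, Prod.fst_sub, ContinuousMap.sub_apply,
        ContinuousLinearMap.prod_apply, ContinuousLinearMap.comp_apply, volt_apply, one_apply_eq_self, ContinuousMap.coe_mk, ContinuousLinearMap.coe_snd', ContinuousMap.const_apply]
      rw [hext (z l) _ t, this]; ring
    · have := hz l t t.2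
      simp only [T, sysOp, Y, X0, _root_.sub_apply, Prod.snd_sub, ContinuousMap.sub_apply,
        ContinuousLinearMap.prod_apply, ContinuousLinearMap.comp_apply, volt_apply, one_apply_eq_self, ContinuousMap.coe_mk, ContinuousLinearMap.coe_fst', ContinuousMap.const_apply]
      rw [hext (w l) _ t, this]; ring
  have hUY : U l = Y := by
    have := Ring.inverse_mul_cancel _ (sys_unit hd (hpr l))
    simp only [U]
    rw [← hY, ← mul_apply_eq_comp]
    simp only [T]
    rw [this]; rfl
  simp only [hUY]
  exact ⟨rfl, rfl⟩

lemma ii_scale {W : ℝ → ℝ} (hW : LocallyIntegrable W volume) (c d : ℝ) :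
    IntervalIntegrable (fun s => ((d * W (c + d * s) : ℝ) : ℂ)) volume 0 1 := by
  have h : IntervalIntegrable (fun s => W (c + d * s)) volume 0 1 := by
    by_cases hd : d = 0
    · subst hd
      simp
    · have h1 : IntervalIntegrable W volume c (c + d) :=
        (hW.integrableOn_isCompact isCompact_uIcc).intervalIntegrable
      have h2 := (h1.comp_add_left c).comp_mul_left (c := d)
      simpa [hd] using h2
  have h3 := h.const_mul d
  rw [intervalIntegrable_iff] at h3 ⊢
  exact h3.ofReal

/-- For fixed `x`, the solution data `u(x,λ)`, `v(x,λ)` of `-u'' + (W + λV) u = 0` are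
restrictions to `ℝ` of entire functions of `λ`; in particular they are real-analytic in `λ`. -/
theorem solution_entire_in_coupling (W V : ℝ → ℝ) (c θ : ℝ)
    (hW : LocallyIntegrable W volume) (hV : LocallyIntegrable V volume)
    (u v : ℝ → ℝ → ℝ)
    (hu : ∀ (lam : ℝ) (x : ℝ), HasDerivAt (fun s => u s lam) (v x lam) x)
    (hv : ∀ (lam : ℝ) (x y : ℝ),
      v x lam = v y lam + ∫ t in y..x, (W t + lam * V t) * u t lam)
    (hu0 : ∀ lam : ℝ, u c lam = Real.sin θ)
    (hv0 : ∀ lam : ℝ, v c lam = Real.cos θ) :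
    ∀ x : ℝ,
      (∃ F G : ℂ → ℂ, Differentiable ℂ F ∧ Differentiable ℂ G ∧
        ∀ lam : ℝ, F (lam : ℂ) = (u x lam : ℂ) ∧ G (lam : ℂ) = (v x lam : ℂ)) ∧
      (∀ lam : ℝ, AnalyticAt ℝ (fun s : ℝ => u x s) lam ∧
        AnalyticAt ℝ (fun s : ℝ => v x s) lam) := by
  intro x
  have hq : ∀ lam : ℝ, LocallyIntegrable (fun t => W t + lam * V t) volume :=
    fun lam => hW.add (hV.smul lam)
  have huc : ∀ lam, Continuous (fun s => u s lam) := fun lam =>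
    continuous_iff_continuousAt.2 fun x => (hu lam x).continuousAt
  have hqu : ∀ lam a b, IntervalIntegrable (fun t => (W t + lam * V t) * u t lam) volume a b :=
    fun lam a b => ((hq lam).integrableOn_isCompact isCompact_uIcc).intervalIntegrable.mul_continuousOn (huc lam).continuousOn
  have hvc : ∀ lam, Continuous (fun s => v s lam) := by
    intro lam
    have h1 : (fun s => v s lam) = fun s => v c lam + ∫ t in c..s, (W t + lam * V t) * u t lam := by
      funext s
      exact hv lam s c
    rw [h1]
    exact continuous_const.add (intervalIntegral.continuous_primitive (hqu lam) c)
  have hui : ∀ lam s, u s lam = u c lam + ∫ t in c..s, v t lam := by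
    intro lam s
    rw [intervalIntegral.integral_eq_sub_of_hasDerivAt (fun t _ => hu lam t)
      ((hvc lam).intervalIntegrable _ _)]
    ring
  set d := x - c with hd
  obtain ⟨F, G, hF, hG, hFG⟩ := core (d : ℂ) (Real.sin θ : ℝ) (Real.cos θ : ℝ)
    (fun s => ((d * W (c + d * s) : ℝ) : ℂ)) (fun s => ((d * V (c + d * s) : ℝ) : ℂ))
    (ii_scale hW c d) (ii_scale hV c d)
    (fun lam t => (u (c + d * t) lam : ℂ)) (fun lam t => (v (c + d * t) lam : ℂ))
    (fun lam => Complex.continuous_ofReal.comp ((huc lam).comp (by fun_prop)))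
    (fun lam => Complex.continuous_ofReal.comp ((hvc lam).comp (by fun_prop)))
    (by
      intro lam t _
      have h1 := intervalIntegral.smul_integral_comp_add_mul (a := 0) (b := t)
        (fun y => v y lam) d c
      rw [mul_zero, add_zero] at h1
      have h2 := hui lam (c + d * t)
      rw [← h1, hu0, smul_eq_mul, ← intervalIntegral.integral_const_mul] at h2
      simp only [← Complex.ofReal_mul]
      rw [intervalIntegral.integral_ofReal, h2]
      push_cast
      rfl)
    (by
      intro lam t _
      have h1 := intervalIntegral.smul_integral_comp_add_mul (a := 0) (b := t)
        (fun y => (W y + lam * V y) * u y lam) d c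
      rw [mul_zero, add_zero] at h1
      have h2 := hv lam (c + d * t) c
      rw [← h1, hv0, smul_eq_mul, ← intervalIntegral.integral_const_mul] at h2
      simp only [← Complex.ofReal_mul, ← Complex.ofReal_add]
      rw [intervalIntegral.integral_ofReal, h2, Complex.ofReal_add]
      congr 3
      ext s
      ring)
  have hx : c + d * 1 = x := by rw [hd]; ring
  simp only [hx] at hFG
  have han : ∀ (H : ℂ → ℂ) (g : ℝ → ℝ), Differentiable ℂ H → (∀ s : ℝ, H s = (g s : ℂ)) →
      ∀ s, AnalyticAt ℝ g s := by
    intro H g hH hg s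
    have h1 : AnalyticAt ℝ (fun r : ℝ => (H (r : ℂ)).re) s :=
      (hH.analyticAt (s : ℂ)).re_ofReal
    simpa [hg] using h1
  exact ⟨⟨F, G, hF, hG, hFG⟩, fun lam => ⟨han F _ hF (fun s => (hFG s).1) lam,
    han G _ hG (fun s => (hFG s).2) lam⟩⟩
end

section
/- Let W, V : ℝ → ℝ be locally integrable and let c, θ ∈ ℝ. Suppose that for each λ ∈ ℝ, (u(·,λ), v(·,λ)) is a solution of −u″ + (W + λ·V)·u = 0 with u(c,λ) = sin θ and v(c,λ) = cos θ, and that R : ℝ×ℝ → (0,∞) and φ : ℝ×ℝ → ℝ satisfy u(x,λ) = R(x,λ)·sin(φ(x,λ)), v(x,λ) = R(x,λ)·cos(φ(x,λ)) and φ(c,λ) = θ for all x, λ, with φ jointly continuous. Then for every fixed x ∈ ℝ, the function λ ↦ φ(x,λ) is differentiable on ℝ with derivative ∂φ/∂λ(x,λ) = −R(x,λ)^{−2}·∫_c^x V(t)·u(t,λ)² dt. -/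
open MeasureTheory

theorem aux_ac_ftc {f g : ℝ → ℝ} {a b : ℝ} (hf : AbsolutelyContinuousOnInterval f a b)
    (hg : ∀ᵐ x, HasDerivAt f (g x) x) : ∫ x in a..b, g x = f b - f a := by
  rw [← hf.integral_deriv_eq_sub]
  apply intervalIntegral.integral_congr_ae
  filter_upwards [hg] with x hx _
  exact hx.deriv.symm

theorem aux_ac_log {f : ℝ → ℝ} {a b : ℝ} (hf : AbsolutelyContinuousOnInterval f a b)
    (hpos : ∀ x, 0 < f x) : AbsolutelyContinuousOnInterval (fun x => Real.log (f x)) a b := by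
  obtain ⟨m, hm, hmf⟩ : ∃ m : ℝ, 0 < m ∧ ∀ x ∈ Set.uIcc a b, m ≤ f x := by
    obtain ⟨y, hy, hmin⟩ := isCompact_uIcc.exists_isMinOn Set.nonempty_uIcc hf.continuousOn
    exact ⟨f y, hpos y, fun x hx => hmin hx⟩
  have key : ∀ s t : ℝ, m ≤ s → m ≤ t → dist (Real.log s) (Real.log t) ≤ m⁻¹ * dist s t := by
    have h1 : ∀ s t : ℝ, m ≤ s → m ≤ t → Real.log s - Real.log t ≤ m⁻¹ * |s - t| := by
      intro s t hs ht
      have hs0 : 0 < s := by linarith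
      have ht0 : 0 < t := by linarith
      rw [← Real.log_div hs0.ne' ht0.ne']
      calc Real.log (s / t) ≤ s / t - 1 := Real.log_le_sub_one_of_pos (by positivity)
        _ = t⁻¹ * (s - t) := by field_simp
        _ ≤ t⁻¹ * |s - t| := by gcongr; exact le_abs_self _
        _ ≤ m⁻¹ * |s - t| := by gcongr
    intro s t hs ht
    rw [Real.dist_eq, Real.dist_eq, abs_le]
    have h2 := h1 s t hs ht
    have h3 := h1 t s ht hs
    rw [abs_sub_comm] at h3
    constructor <;> linarith
  rw [absolutelyContinuousOnInterval_iff] at hf ⊢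
  intro ε hε
  obtain ⟨δ, hδ, h⟩ := hf (m * ε) (by positivity)
  refine ⟨δ, hδ, fun E hE hl => ?_⟩
  have h1 := h E hE hl
  calc _ ≤ ∑ i ∈ Finset.range E.1, m⁻¹ * dist (f (E.2 i).1) (f (E.2 i).2) := by
        apply Finset.sum_le_sum
        intro i hi
        exact key _ _ (hmf _ (hE.1 i hi).1) (hmf _ (hE.1 i hi).2)
    _ = m⁻¹ * ∑ i ∈ Finset.range E.1, dist (f (E.2 i).1) (f (E.2 i).2) := by
        rw [Finset.mul_sum]
    _ < m⁻¹ * (m * ε) := by gcongr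
    _ = ε := by field_simp

theorem aux_deriv_mul_cont {K : ℝ → ℝ} {l : ℝ} (hK : ContinuousAt K l) :
    HasDerivAt (fun m => (m - l) * K m) (K l) l := by
  rw [hasDerivAt_iff_tendsto_slope]
  refine (hK.tendsto.mono_left nhdsWithin_le_nhds).congr' ?_
  filter_upwards [self_mem_nhdsWithin] with m hm
  have : m - l ≠ 0 := sub_ne_zero.mpr hm
  simp [slope_def_field]
  field_simp


/-- Derivative of the Prüfer phase with respect to the coupling constant `λ`:
`∂φ/∂λ(x,λ) = -R(x,λ)⁻² ∫_c^x V u(·,λ)²`. -/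
theorem prufer_phase_deriv_coupling (W V : ℝ → ℝ) (c θ : ℝ)
    (hW : LocallyIntegrable W volume) (hV : LocallyIntegrable V volume)
    (u v R φ : ℝ → ℝ → ℝ)
    (hu : ∀ (lam : ℝ) (x : ℝ), HasDerivAt (fun s => u s lam) (v x lam) x)
    (hv : ∀ (lam : ℝ) (x y : ℝ),
      v x lam = v y lam + ∫ t in y..x, (W t + lam * V t) * u t lam)
    (hu0 : ∀ lam : ℝ, u c lam = Real.sin θ)
    (hv0 : ∀ lam : ℝ, v c lam = Real.cos θ)
    (hR : ∀ x lam : ℝ, 0 < R x lam)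
    (huR : ∀ x lam : ℝ, u x lam = R x lam * Real.sin (φ x lam))
    (hvR : ∀ x lam : ℝ, v x lam = R x lam * Real.cos (φ x lam))
    (hφ0 : ∀ lam : ℝ, φ c lam = θ)
    (hφcont : Continuous fun p : ℝ × ℝ => φ p.1 p.2) :
    ∀ x lam : ℝ,
      HasDerivAt (fun l => φ x l)
        (-(R x lam ^ 2)⁻¹ * ∫ t in c..x, V t * u t lam ^ 2) lam := by

  have hqi : ∀ lam, LocallyIntegrable (fun t => W t + lam * V t) volume := by
    intro lam
    exact hW.add (hV.smul lam)
  have hii : ∀ {f : ℝ → ℝ}, LocallyIntegrable f volume → ∀ a b, IntervalIntegrable f volume a b :=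
    fun hf a b => intervalIntegrable_iff.mpr
      ((hf.integrableOn_isCompact isCompact_uIcc).mono_set Set.uIoc_subset_uIcc)
  have hucont : ∀ lam, Continuous (fun s => u s lam) := fun lam =>
    continuous_iff_continuousAt.mpr fun x => (hu lam x).continuousAt
  have hqu : ∀ lam, LocallyIntegrable (fun t => (W t + lam * V t) * u t lam) volume := by
    intro lam
    rw [← locallyIntegrableOn_univ]
    exact ((locallyIntegrableOn_univ.mpr (hqi lam)).mul_continuousOn (hucont lam).continuousOn
      isOpen_univ.isLocallyClosed)
  have hveq : ∀ lam, (fun s => v s lam) =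
      fun x => Real.cos θ + ∫ t in c..x, (W t + lam * V t) * u t lam := by
    intro lam
    funext x
    rw [hv lam x c, hv0]
  have hvder : ∀ lam, ∀ᵐ x, HasDerivAt (fun s => v s lam) ((W x + lam * V x) * u x lam) x := by
    intro lam
    filter_upwards [_root_.LocallyIntegrable.ae_hasDerivAt_integral (hqu lam)] with x hx
    rw [hveq]
    exact (hx c).const_add _
  have hvac : ∀ lam x, AbsolutelyContinuousOnInterval (fun s => v s lam) c x := by
    intro lam x
    rw [hveq]
    have h1 : AbsolutelyContinuousOnInterval (fun _ : ℝ => Real.cos θ) c x :=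
      (contDiff_const (n := 1)).contDiffOn.absolutelyContinuousOnInterval
    exact h1.fun_add ((hii (hqu lam) c x).absolutelyContinuousOnInterval_intervalIntegral (by simp))
  have hvcont : ∀ lam, Continuous (fun s => v s lam) := by
    intro lam
    rw [hveq]
    exact continuous_const.add (intervalIntegral.continuous_primitive (hii (hqu lam)) c)
  have huac : ∀ lam x, AbsolutelyContinuousOnInterval (fun s => u s lam) c x := by
    intro lam x
    apply ContDiffOn.absolutelyContinuousOnInterval
    apply ContDiff.contDiffOn
    rw [contDiff_one_iff_deriv]
    refine ⟨fun x => (hu lam x).differentiableAt, ?_⟩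
    have : deriv (fun s => u s lam) = fun s => v s lam := by
      funext s
      exact (hu lam s).deriv
    rw [this]
    exact hvcont lam
  -- Wronskian identity
  have hwron : ∀ l m x, u x l * v x m - v x l * u x m
      = (m - l) * ∫ t in c..x, V t * (u t l * u t m) := by
    intro l m x
    have h1 := aux_ac_ftc (f := fun s => u s l * v s m - v s l * u s m)
      (g := fun t => (m - l) * (V t * (u t l * u t m)))
      (((huac l x).fun_mul (hvac m x)).fun_sub ((hvac l x).fun_mul (huac m x))) (by
        filter_upwards [hvder l, hvder m] with t h1 h2
        convert! ((hu l t).mul h2).sub (h1.mul (hu m t)) using 1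
        ring)
    rw [intervalIntegral.integral_const_mul] at h1
    rw [h1]
    simp only [hu0, hv0]
    ring
  have hN : ∀ x l, u x l * u x l + v x l * v x l = R x l ^ 2 := by
    intro x l
    rw [huR, hvR]
    linear_combination R x l ^ 2 * Real.sin_sq_add_cos_sq (φ x l)
  have hlog : ∀ x l, Real.log (R x l) =
      ∫ t in c..x, (1 + (W t + l * V t)) * (Real.sin (φ t l) * Real.cos (φ t l)) := by
    intro x l
    have hpos : ∀ s, 0 < u s l * u s l + v s l * v s l := fun s => by
      rw [hN]; have := hR s l; positivity
    have h1 := aux_ac_ftc (f := fun s => (1/2) * Real.log (u s l * u s l + v s l * v s l))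
      (g := fun t => (1 + (W t + l * V t)) * (Real.sin (φ t l) * Real.cos (φ t l)))
      ((aux_ac_log (((huac l x).fun_mul (huac l x)).fun_add ((hvac l x).fun_mul (hvac l x)))
        hpos).const_mul _) (by
        filter_upwards [hvder l] with t h2
        have h3 := ((((hu l t).mul (hu l t)).add (h2.mul h2)).log (hpos t).ne').const_mul (1/2 : ℝ)
        convert! h3 using 1
        simp only [Pi.add_apply, Pi.mul_apply]
        rw [hN, huR t l, hvR t l]
        have := (hR t l).ne'
        field_simp
        ring)
    rw [h1]
    simp only [hN, Real.log_pow]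
    have hc : R c l ^ 2 = 1 := by
      rw [← hN, hu0, hv0, ← sq, ← sq, Real.sin_sq_add_cos_sq]
    have hc1 : R c l = 1 := by
      have := hR c l
      nlinarith
    rw [hc1]
    simp
  have hφx : ∀ l, Continuous (fun t => φ t l) := fun l =>
    hφcont.comp (continuous_id.prodMk continuous_const)
  have hφl : ∀ t, Continuous (fun l => φ t l) := fun t =>
    hφcont.comp (continuous_const.prodMk continuous_id)
  intro x lam
  set B : ℝ → ℝ := fun t => 1 + (|W t| + (|lam| + 1) * |V t|) with hB
  have hnorm : ∀ {f : ℝ → ℝ}, LocallyIntegrable f volume →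
      LocallyIntegrable (fun t => ‖f t‖) volume := fun hf =>
    locallyIntegrableOn_univ.mp (locallyIntegrableOn_univ.mpr hf).norm
  have hBl : LocallyIntegrable B volume := by
    have h1 : LocallyIntegrable (fun _ : ℝ => (1 : ℝ)) volume := locallyIntegrable_const _
    exact h1.add ((hnorm hW).add ((hnorm hV).smul (|lam| + 1)))
  have hB0 : ∀ t, 0 ≤ B t := fun t => by positivity
  have hnear : ∀ᶠ m in nhds lam, |m| ≤ |lam| + 1 := by
    have : ∀ᶠ m in nhds lam, |m| < |lam| + 1 :=
      (continuous_abs.tendsto lam).eventually_lt_const (by linarith)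
    exact this.mono fun m hm => hm.le
  have hgB : ∀ m, |m| ≤ |lam| + 1 → ∀ t,
      ‖(1 + (W t + m * V t)) * (Real.sin (φ t m) * Real.cos (φ t m))‖ ≤ B t := by
    intro m hm t
    rw [norm_mul, norm_mul]
    have h1 : ‖Real.sin (φ t m)‖ * ‖Real.cos (φ t m)‖ ≤ 1 :=
      mul_le_one₀ (Real.abs_sin_le_one _) (norm_nonneg _) (Real.abs_cos_le_one _)
    have h2 : ‖1 + (W t + m * V t)‖ ≤ B t := by
      calc ‖1 + (W t + m * V t)‖ ≤ ‖(1:ℝ)‖ + (‖W t‖ + ‖m * V t‖) :=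
            (norm_add_le _ _).trans (by gcongr; exact norm_add_le _ _)
        _ ≤ B t := by
            simp only [hB, Real.norm_eq_abs, abs_mul, abs_one]
            gcongr
    calc _ ≤ B t * 1 := by gcongr
      _ = B t := mul_one _
  have hRcont : ∀ t, ContinuousAt (fun m => R t m) lam := by
    intro t
    have h1 : ContinuousAt (fun m => ∫ s in c..t,
        (1 + (W s + m * V s)) * (Real.sin (φ s m) * Real.cos (φ s m))) lam := by
      apply intervalIntegral.continuousAt_of_dominated_interval (bound := B)
      · refine Filter.Eventually.of_forall fun m => ?_
        refine AEStronglyMeasurable.mul ?_ ?_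
        · exact (aestronglyMeasurable_const.add (hqi m).aestronglyMeasurable).mono_measure
            Measure.restrict_le_self
        · exact ((Real.continuous_sin.comp (hφx m)).mul
            (Real.continuous_cos.comp (hφx m))).aestronglyMeasurable
      · filter_upwards [hnear] with m hm
        exact Filter.Eventually.of_forall fun s _ => hgB m hm s
      · exact hii hBl c t
      · refine Filter.Eventually.of_forall fun s _ => ?_
        have := hφl s
        apply Continuous.continuousAt
        fun_prop
    have h2 : (fun m => R t m) = fun m => Real.exp (∫ s in c..t,
        (1 + (W s + m * V s)) * (Real.sin (φ s m) * Real.cos (φ s m))) := by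
      funext m
      rw [← hlog, Real.exp_log (hR t m)]
    rw [h2]
    exact h1.rexp
  have hul : ∀ t, ContinuousAt (fun m => u t m) lam := by
    intro t
    simp only [huR]
    exact (hRcont t).mul (Real.continuous_sin.comp (hφl t)).continuousAt
  set M : ℝ := ∫ t in Set.uIoc c x, B t with hM
  have hRb : ∀ m, |m| ≤ |lam| + 1 → ∀ t ∈ Set.uIoc c x, R t m ≤ Real.exp M := by
    intro m hm t ht
    rw [← Real.log_le_iff_le_exp (hR t m), hlog]
    refine (le_abs_self _).trans ?_
    rw [← Real.norm_eq_abs]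
    refine intervalIntegral.norm_integral_le_integral_norm_uIoc.trans ?_
    have hBx : IntegrableOn B (Set.uIoc c x) := intervalIntegrable_iff.mp (hii hBl c x)
    have hsub : Set.uIoc c t ⊆ Set.uIoc c x :=
      Set.uIoc_subset_uIoc_of_uIcc_subset_uIcc
        (Set.uIcc_subset_uIcc_left (Set.uIoc_subset_uIcc ht))
    calc _ ≤ ∫ s in Set.uIoc c t, B s := by
          apply integral_mono_of_nonneg
          · exact Filter.Eventually.of_forall fun s => norm_nonneg _
          · exact hBx.mono_set hsub
          · exact Filter.Eventually.of_forall fun s => hgB m hm s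
      _ ≤ M := setIntegral_mono_set hBx (Filter.Eventually.of_forall hB0)
          (Filter.Eventually.of_forall hsub)
  have hIcont : ContinuousAt (fun m => ∫ t in c..x, V t * (u t lam * u t m)) lam := by
    apply intervalIntegral.continuousAt_of_dominated_interval
      (bound := fun t => ‖V t‖ * (‖u t lam‖ * Real.exp M))
    · refine Filter.Eventually.of_forall fun m => ?_
      refine AEStronglyMeasurable.mul ?_ ?_
      · exact hV.aestronglyMeasurable.mono_measure Measure.restrict_le_self
      · exact ((hucont lam).mul (hucont m)).aestronglyMeasurable
    · filter_upwards [hnear] with m hm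
      refine Filter.Eventually.of_forall fun t ht => ?_
      rw [norm_mul, norm_mul]
      gcongr
      refine le_trans ?_ (hRb m hm t ht)
      rw [huR t m, norm_mul, Real.norm_of_nonneg (hR t m).le]
      exact mul_le_of_le_one_right (hR t m).le (Real.abs_sin_le_one _)
    · exact (hii hV c x).norm.mul_continuousOn
        (((hucont lam).norm.mul continuous_const).continuousOn)
    · exact Filter.Eventually.of_forall fun t _ =>
        continuousAt_const.mul (continuousAt_const.mul (hul t))
  set K : ℝ → ℝ := fun m => -(R x lam * R x m)⁻¹ * ∫ t in c..x, V t * (u t lam * u t m) with hK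
  have hKcont : ContinuousAt K lam := by
    refine ContinuousAt.mul (ContinuousAt.neg (ContinuousAt.inv₀ ?_ ?_)) hIcont
    · exact continuousAt_const.mul (hRcont x)
    · exact (mul_pos (hR x lam) (hR x lam)).ne'
  have hsin : ∀ m, Real.sin (φ x m - φ x lam) = (m - lam) * K m := by
    intro m
    have h1 := hwron lam m x
    have h2 : (m - lam) * K m
        = -(R x lam * R x m)⁻¹ * ((m - lam) * ∫ t in c..x, V t * (u t lam * u t m)) := by
      simp only [hK]; ring
    rw [h2, ← h1, huR x lam, huR x m, hvR x lam, hvR x m, Real.sin_sub]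
    have := (hR x lam).ne'
    have := (hR x m).ne'
    field_simp
    ring
  have hd := aux_deriv_mul_cont hKcont
  have harc : HasDerivAt (fun m => φ x lam + Real.arcsin ((m - lam) * K m)) (K lam) lam := by
    have h1 : HasDerivAt Real.arcsin 1 ((lam - lam) * K lam) := by
      have := Real.hasDerivAt_arcsin (x := 0) (by norm_num) (by norm_num)
      simpa using this
    have := (h1.comp lam hd).const_add (φ x lam)
    simpa using! this
  have hval : K lam = -(R x lam ^ 2)⁻¹ * ∫ t in c..x, V t * u t lam ^ 2 := by
    simp only [hK, sq]
  rw [← hval]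
  refine harc.congr_of_eventuallyEq ?_
  have hc0 : Filter.Tendsto (fun m => φ x m - φ x lam) (nhds lam) (nhds 0) := by
    have h := ((hφl x).sub (continuous_const (y := φ x lam))).tendsto lam
    simpa using! h
  filter_upwards [hc0.eventually_const_lt (show -(Real.pi/2) < 0 by linarith [Real.pi_pos]),
    hc0.eventually_lt_const (show 0 < Real.pi/2 by linarith [Real.pi_pos])] with m h1 h2
  rw [← hsin, Real.arcsin_sin h1.le h2.le]
  ring
end

section
/- (Sturm comparison) Let q₁, q₂ : ℝ → ℝ be locally integrable, let c ≤ x be real numbers, and suppose q₁(t) ≥ q₂(t) for almost every t ∈ [c, x]. For i = 1, 2 let (uᵢ, vᵢ) be a solution of −u″ + qᵢ·u = 0 with uᵢ(c) = sin θᵢ and vᵢ(c) = cos θᵢ, and let (Rᵢ, φᵢ) be Prüfer variables for (uᵢ, vᵢ) with φᵢ(c) = θᵢ. If θ₂ ≥ θ₁, then φ₂(x) ≥ φ₁(x). -/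
open MeasureTheory

theorem aux_prim (F f : ℝ → ℝ) (hf : LocallyIntegrable f volume)
    (h : ∀ y z : ℝ, F y = F z + ∫ t in z..y, f t) :
    Continuous F ∧ (∀ a b, AbsolutelyContinuousOnInterval F a b) ∧
      ∀ᵐ t ∂volume, HasDerivAt F (f t) t := by
  have hi : ∀ a b, IntervalIntegrable f volume a b := fun a b =>
    intervalIntegrable_iff.mpr <|
      (hf.integrableOn_isCompact isCompact_uIcc).mono_set Set.uIoc_subset_uIcc
  refine ⟨?_, ?_, ?_⟩
  · have : F = fun y => F 0 + ∫ t in (0:ℝ)..y, f t := funext fun y => h y 0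
    rw [this]
    exact continuous_const.add (intervalIntegral.continuous_primitive hi 0)
  · intro a b
    have h1 : AbsolutelyContinuousOnInterval (fun y => ∫ t in a..y, f t) a b :=
      (hi a b).absolutelyContinuousOnInterval_intervalIntegral Set.left_mem_uIcc
    have h2 : AbsolutelyContinuousOnInterval (fun _ : ℝ => F a) a b :=
      (LipschitzWith.const (F a)).lipschitzOnWith.absolutelyContinuousOnInterval
    have : F = (fun _ : ℝ => F a) + (fun y => ∫ t in a..y, f t) := funext fun y => h y a
    rw [this]
    exact h2.add h1
  · filter_upwards [_root_.LocallyIntegrable.ae_hasDerivAt_integral hf] with t ht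
    have : F = fun y => F 0 + ∫ t in (0:ℝ)..y, f t := funext fun y => h y 0
    rw [this]
    exact (ht 0).const_add _

theorem aux_sol (q u v : ℝ → ℝ) (hq : LocallyIntegrable q volume)
    (hu : ∀ y : ℝ, HasDerivAt u (v y) y)
    (hv : ∀ y z : ℝ, v y = v z + ∫ t in z..y, q t * u t) :
    Continuous u ∧ (∀ a b, AbsolutelyContinuousOnInterval u a b) ∧
    (∀ a b, AbsolutelyContinuousOnInterval v a b) ∧
      ∀ᵐ t ∂volume, HasDerivAt v (q t * u t) t := by
  have huc : Continuous u := continuous_iff_continuousAt.mpr fun y => (hu y).continuousAt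
  have hl : LocallyIntegrable (fun t => q t * u t) volume := by
    rw [← locallyIntegrableOn_univ] at hq ⊢
    exact hq.mul_continuousOn huc.continuousOn isClosed_univ.isLocallyClosed
  obtain ⟨a1, a2, a3⟩ := aux_prim v _ hl hv
  obtain ⟨b1, b2, b3⟩ := aux_prim u v a1.locallyIntegrable (fun y z => by
    rw [intervalIntegral.integral_eq_sub_of_hasDerivAt (fun t _ => hu t)
      (a1.intervalIntegrable _ _)]
    ring)
  exact ⟨huc, b2, a2, a3⟩

theorem aux_sign (u₁ v₁ u₂ v₂ : ℝ → ℝ) (s : ℝ)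
    (hu₁ : HasDerivAt u₁ (v₁ s) s) (hu₂ : HasDerivAt u₂ (v₂ s) s)
    (h : 0 < u₁ s * u₂ s ∨ (u₁ s = 0 ∧ u₂ s = 0 ∧ 0 < v₁ s * v₂ s)) :
    ∀ᶠ t in nhdsWithin s (Set.Ioi s), 0 ≤ u₁ t * u₂ t := by
  rcases h with h | ⟨h1, h2, h3⟩
  · have := (hu₁.continuousAt.mul hu₂.continuousAt).eventually (lt_mem_nhds h)
    exact (this.filter_mono nhdsWithin_le_nhds).mono fun t ht => ht.le
  · have := (hu₁.tendsto_slope.mul hu₂.tendsto_slope).eventually (lt_mem_nhds h3)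
    have := this.filter_mono (nhdsWithin_mono s (fun t (ht : s < t) => ht.ne'))
    filter_upwards [this, self_mem_nhdsWithin] with t ht hst
    have hst' : t - s ≠ 0 := sub_ne_zero.mpr (ne_of_gt hst)
    have e : u₁ t * u₂ t = (slope u₁ s t * slope u₂ s t) * (t - s) ^ 2 := by
      simp only [slope_def_field, h1, h2]
      field_simp
      ring
    rw [e]
    positivity

/-- Sturm comparison theorem in terms of Prüfer phases: if `q₁ ≥ q₂` a.e. on `[c,x]`
and `θ₂ ≥ θ₁`, then `φ₂(x) ≥ φ₁(x)`. -/
theorem sturm_comparison (q₁ q₂ : ℝ → ℝ) (c x θ₁ θ₂ : ℝ) (hcx : c ≤ x)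
    (hq₁ : LocallyIntegrable q₁ volume) (hq₂ : LocallyIntegrable q₂ volume)
    (hcmp : ∀ᵐ t ∂volume, t ∈ Set.Icc c x → q₂ t ≤ q₁ t)
    (u₁ v₁ R₁ φ₁ u₂ v₂ R₂ φ₂ : ℝ → ℝ)
    (hu₁ : ∀ y : ℝ, HasDerivAt u₁ (v₁ y) y)
    (hv₁ : ∀ y z : ℝ, v₁ y = v₁ z + ∫ t in z..y, q₁ t * u₁ t)
    (hu₂ : ∀ y : ℝ, HasDerivAt u₂ (v₂ y) y)
    (hv₂ : ∀ y z : ℝ, v₂ y = v₂ z + ∫ t in z..y, q₂ t * u₂ t)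
    (hu₁0 : u₁ c = Real.sin θ₁) (hv₁0 : v₁ c = Real.cos θ₁)
    (hu₂0 : u₂ c = Real.sin θ₂) (hv₂0 : v₂ c = Real.cos θ₂)
    (hR₁ : ∀ y : ℝ, 0 < R₁ y) (hR₂ : ∀ y : ℝ, 0 < R₂ y)
    (hφ₁c : Continuous φ₁) (hφ₂c : Continuous φ₂)
    (huR₁ : ∀ y : ℝ, u₁ y = R₁ y * Real.sin (φ₁ y))
    (hvR₁ : ∀ y : ℝ, v₁ y = R₁ y * Real.cos (φ₁ y))
    (huR₂ : ∀ y : ℝ, u₂ y = R₂ y * Real.sin (φ₂ y))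
    (hvR₂ : ∀ y : ℝ, v₂ y = R₂ y * Real.cos (φ₂ y))
    (hφ₁0 : φ₁ c = θ₁) (hφ₂0 : φ₂ c = θ₂)
    (hθ : θ₁ ≤ θ₂) :
    φ₁ x ≤ φ₂ x := by
  obtain ⟨c1, au1, av1, d1⟩ := aux_sol q₁ u₁ v₁ hq₁ hu₁ hv₁
  obtain ⟨c2, au2, av2, d2⟩ := aux_sol q₂ u₂ v₂ hq₂ hu₂ hv₂
  by_contra! hlt
  have hcl : IsCompact (Set.Icc c x ∩ {t | φ₁ t ≤ φ₂ t}) :=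
    isCompact_Icc.inter_right (isClosed_le hφ₁c hφ₂c)
  obtain ⟨s, ⟨⟨hcs, hsx⟩, hs⟩, hmax⟩ := hcl.exists_isGreatest
    ⟨c, ⟨le_rfl, hcx⟩, by simpa [hφ₁0, hφ₂0] using hθ⟩
  have hs : φ₁ s ≤ φ₂ s := hs
  have hsx : s < x := lt_of_le_of_ne hsx (by rintro rfl; linarith)
  have hgt : ∀ t, s < t → t ≤ x → φ₂ t < φ₁ t := by
    intro t h1 h2
    by_contra! h3
    have := hmax ⟨⟨by linarith, h2⟩, h3⟩
    linarith
  have heq : φ₁ s = φ₂ s := by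
    refine le_antisymm hs ?_
    have h1 : ∀ᶠ t in nhdsWithin s (Set.Ioi s), φ₂ t ≤ φ₁ t := by
      filter_upwards [Ioc_mem_nhdsGT hsx] with t ht
      exact (hgt t ht.1 ht.2).le
    exact le_of_tendsto_of_tendsto (hφ₂c.continuousAt.mono_left nhdsWithin_le_nhds)
      (hφ₁c.continuousAt.mono_left nhdsWithin_le_nhds) h1
  have hsign := aux_sign u₁ v₁ u₂ v₂ s (hu₁ s) (hu₂ s) (by
    rw [huR₁, huR₂, hvR₁, hvR₂, heq]
    have hR := mul_pos (hR₁ s) (hR₂ s)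
    by_cases h0 : Real.sin (φ₂ s) = 0
    · right
      have hc : Real.cos (φ₂ s) ^ 2 = 1 := by
        have := Real.sin_sq_add_cos_sq (φ₂ s)
        rw [h0] at this; linarith
      refine ⟨by rw [h0, mul_zero], by rw [h0, mul_zero], ?_⟩
      nlinarith
    · left
      have : 0 < Real.sin (φ₂ s) ^ 2 := by positivity
      nlinarith [mul_pos hR this])
  have hpi : ∀ᶠ t in nhdsWithin s (Set.Ioi s), φ₁ t - φ₂ t < Real.pi := by
    have : ContinuousAt (fun t => φ₁ t - φ₂ t) s := (hφ₁c.sub hφ₂c).continuousAt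
    exact (this.eventually (gt_mem_nhds (by simpa [heq] using Real.pi_pos))).filter_mono
      nhdsWithin_le_nhds
  obtain ⟨d, hsd, hd⟩ := mem_nhdsGT_iff_exists_Ioo_subset.mp
    ((hsign.and hpi).and (Ioc_mem_nhdsGT hsx))
  have hsd : s < d := hsd
  obtain ⟨b, hsb, hbd⟩ := exists_between hsd
  obtain ⟨⟨_, hb2⟩, hb3⟩ := hd ⟨hsb, hbd⟩
  have hbx : b ≤ x := hb3.2
  have hac : AbsolutelyContinuousOnInterval (fun t => u₁ t * v₂ t - v₁ t * u₂ t) s b :=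
    ((au1 s b).fun_mul (av2 s b)).sub ((av1 s b).fun_mul (au2 s b))
  have hint := hac.integral_deriv_eq_sub
  have hle : ∫ t in s..b, deriv (fun t => u₁ t * v₂ t - v₁ t * u₂ t) t ≤ 0 := by
    rw [intervalIntegral.integral_of_le hsb.le]
    refine integral_nonpos_of_ae ?_
    rw [Filter.EventuallyLE, ae_restrict_iff' measurableSet_Ioc]
    filter_upwards [d1, d2, hcmp] with t h1 h2 h3 ht
    have hq := h3 ⟨by linarith [ht.1], by linarith [ht.2]⟩
    have hd' := ((hu₁ t).fun_mul h2).fun_sub (h1.fun_mul (hu₂ t))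
    rw [hd'.deriv]
    have hnn : 0 ≤ u₁ t * u₂ t := (hd ⟨ht.1, by linarith [ht.2]⟩).1.1
    simp only [Pi.zero_apply]
    nlinarith [mul_nonneg hnn (sub_nonneg.mpr hq)]
  have key : ∀ t, u₁ t * v₂ t - v₁ t * u₂ t = R₁ t * R₂ t * Real.sin (φ₁ t - φ₂ t) := by
    intro t
    rw [huR₁, huR₂, hvR₁, hvR₂, Real.sin_sub]
    ring
  rw [hint] at hle
  simp only [key, heq, sub_self, Real.sin_zero, mul_zero, sub_zero] at hle
  have hsin : 0 < Real.sin (φ₁ b - φ₂ b) :=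
    Real.sin_pos_of_pos_of_lt_pi (by linarith [hgt b hsb hbx]) hb2
  have := mul_pos (mul_pos (hR₁ b) (hR₂ b)) hsin
  linarith
end

section
/- (Large coupling limit of the Prüfer amplitude) Let g : ℝ → ℝ be bounded and measurable, let [a, b] ⊆ [−1, 0] with a < b, and let f : ℝ → ℝ be measurable with 0 ≤ f(x) ≤ C for all x and some constant C < ∞, f(x) > 0 for almost every x ∈ [a, b], and f(x) = 0 for all x ∉ [a, b]. Fix β ∈ ℝ, and for each λ ∈ ℝ let (u_λ, v_λ) be the solution of −u″ + (g + λ·f)·u = 0 with u_λ(−1) = sin β and v_λ(−1) = cos β. Then u_λ(0)² + v_λ(0)² → ∞ as λ → ∞; equivalently, the Prüfer amplitude at 0 satisfies R(0, λ) = (u_λ(0)² + v_λ(0)²)^{1/2} → ∞ as λ → ∞. -/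
open MeasureTheory Filter


lemma gron_fwd (φ : ℝ → ℝ) (hφ : Continuous φ) (A K c d : ℝ) (hK : 0 ≤ K) (hcd : c ≤ d)
    (h : ∀ x ∈ Set.Icc c d, φ x ≤ A + K * ∫ t in c..x, φ t) :
    φ d ≤ A * Real.exp (K * (d - c)) := by
  have hW : ∀ x, HasDerivAt (fun x => (A + K * ∫ t in c..x, φ t) * Real.exp (-(K * (x - c))))
      ((K * φ x) * Real.exp (-(K * (x - c))) + (A + K * ∫ t in c..x, φ t) *
        (Real.exp (-(K * (x - c))) * (-(K * 1)))) x := by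
    intro x
    have h1 : HasDerivAt (fun x => A + K * ∫ t in c..x, φ t) (K * φ x) x :=
      ((hφ.integral_hasStrictDerivAt c x).hasDerivAt.const_mul K).const_add A
    have h2 : HasDerivAt (fun x => Real.exp (-(K * (x - c))))
        (Real.exp (-(K * (x - c))) * (-(K * 1))) x :=
      ((((hasDerivAt_id x).sub_const c).const_mul K).neg).exp
    exact h1.mul h2
  have hanti := antitoneOn_of_deriv_nonpos (convex_Icc c d)
    (f := fun x => (A + K * ∫ t in c..x, φ t) * Real.exp (-(K * (x - c))))
    (fun x _ => (hW x).continuousAt.continuousWithinAt)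
    (fun x _ => (hW x).differentiableAt.differentiableWithinAt)
    (fun x hx => by
      rw [(hW x).deriv]
      have := h x (interior_subset hx)
      have he := Real.exp_pos (-(K * (x - c)))
      have : 0 ≤ K * ((A + K * ∫ t in c..x, φ t) - φ x) * Real.exp (-(K * (x - c))) :=
        mul_nonneg (mul_nonneg hK (by linarith)) he.le
      nlinarith)
  have h3 := hanti (Set.left_mem_Icc.2 hcd) (Set.right_mem_Icc.2 hcd) hcd
  simp only [intervalIntegral.integral_same, sub_self, mul_zero, add_zero, neg_zero, Real.exp_zero,
    mul_one] at h3
  have h4 := h d (Set.right_mem_Icc.2 hcd)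
  rw [Real.exp_neg, ← div_eq_mul_inv, div_le_iff₀ (Real.exp_pos _)] at h3
  linarith

lemma gron_bwd (φ : ℝ → ℝ) (hφ : Continuous φ) (A K c d : ℝ) (hK : 0 ≤ K) (hcd : c ≤ d)
    (h : ∀ x ∈ Set.Icc c d, φ x ≤ A + K * ∫ t in x..d, φ t) :
    φ c ≤ A * Real.exp (K * (d - c)) := by
  have := gron_fwd (fun x => φ (-x)) (by fun_prop) A K (-d) (-c) hK (by linarith) (by
    intro x hx
    have h1 := h (-x) ⟨by linarith [hx.2], by linarith [hx.1]⟩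
    rw [intervalIntegral.integral_comp_neg]
    simpa using h1)
  simpa [neg_add_eq_sub] using this

/-- growth bound -/
lemma growth (U V : ℝ → ℝ) (hU : ∀ x, HasDerivAt U (V x) x) (hVc : Continuous V)
    (G c d : ℝ) (hG : 0 ≤ G) (hcd : c ≤ d)
    (hb : ∀ x ∈ Set.Icc c d, ∀ y ∈ Set.Icc c d, x ≤ y → |V y - V x| ≤ G * ∫ t in x..y, |U t|) :
    |U d| + |V d| ≤ (|U c| + |V c|) * Real.exp ((1 + G) * (d - c)) ∧
    |U c| + |V c| ≤ (|U d| + |V d|) * Real.exp ((1 + G) * (d - c)) := by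
  have hUc : Continuous U := continuous_iff_continuousAt.2 fun x => (hU x).continuousAt
  have key : ∀ x ∈ Set.Icc c d, ∀ y ∈ Set.Icc c d, x ≤ y →
      |U y - U x| + |V y - V x| ≤ (1 + G) * ∫ t in x..y, (|U t| + |V t|) := by
    intro x hx y hy hxy
    have h1 : U y - U x = ∫ t in x..y, V t :=
      (intervalIntegral.integral_eq_sub_of_hasDerivAt (fun t _ => hU t)
        (hVc.intervalIntegrable _ _)).symm
    have h2 : |U y - U x| ≤ ∫ t in x..y, |V t| := by
      rw [h1]; exact intervalIntegral.abs_integral_le_integral_abs hxy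
    have h3 := hb x hx y hy hxy
    rw [intervalIntegral.integral_add (hUc.abs.intervalIntegrable _ _)
      (hVc.abs.intervalIntegrable _ _)]
    have h4 : 0 ≤ ∫ t in x..y, |V t| :=
      intervalIntegral.integral_nonneg hxy (fun t _ => abs_nonneg _)
    have h5 : 0 ≤ ∫ t in x..y, |U t| :=
      intervalIntegral.integral_nonneg hxy (fun t _ => abs_nonneg _)
    nlinarith [mul_nonneg hG h4]
  constructor
  · refine gron_fwd (fun x => |U x| + |V x|) (by fun_prop) _ _ _ _ (by linarith) hcd ?_
    intro x hx
    have := key c (Set.left_mem_Icc.2 hcd) x hx hx.1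
    have h1 := abs_sub_abs_le_abs_sub (U x) (U c)
    have h2 := abs_sub_abs_le_abs_sub (V x) (V c)
    linarith
  · refine gron_bwd (fun x => |U x| + |V x|) (by fun_prop) _ _ _ _ (by linarith) hcd ?_
    intro x hx
    have := key x hx d (Set.right_mem_Icc.2 hcd) hx.2
    have h1 := abs_sub_abs_le_abs_sub (U x) (U d)
    have h2 := abs_sub_abs_le_abs_sub (V x) (V d)
    rw [abs_sub_comm] at h1 h2
    linarith

lemma prod_rule (U V h : ℝ → ℝ) (hU : ∀ x, HasDerivAt U (V x) x) (hVc : Continuous V)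
    (hh : ∀ x y, IntervalIntegrable h volume x y)
    (hV : ∀ x y, V x = V y + ∫ t in y..x, h t) (a b : ℝ) :
    U b * V b - U a * V a = ∫ t in a..b, (V t * V t + U t * h t) := by
  have cac : ∀ r : ℝ, AbsolutelyContinuousOnInterval (fun _ : ℝ => r) a b := fun r =>
    (LipschitzWith.const r).lipschitzOnWith.absolutelyContinuousOnInterval
  have hUeq : U = fun x => U a + ∫ t in a..x, V t := by
    funext x
    rw [intervalIntegral.integral_eq_sub_of_hasDerivAt (fun t _ => hU t)
        (hVc.intervalIntegrable _ _)]
    ring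
  have hVeq : V = fun x => V a + ∫ t in a..x, h t := funext fun x => hV x a
  have hUac : AbsolutelyContinuousOnInterval U a b := by
    rw [hUeq]
    exact (cac _).fun_add ((hVc.intervalIntegrable a b).absolutelyContinuousOnInterval_intervalIntegral
      (by simp))
  have hVac : AbsolutelyContinuousOnInterval V a b := by
    rw [hVeq]
    exact (cac _).fun_add ((hh a b).absolutelyContinuousOnInterval_intervalIntegral (by simp))
  rw [← hUac.integral_deriv_mul_eq_sub hVac]
  apply intervalIntegral.integral_congr_ae
  filter_upwards [(hh a b).ae_hasDerivAt_integral] with x hx hxm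
  have h1 := hx (Set.uIoc_subset_uIcc hxm) a (by simp)
  have h2 : HasDerivAt V (h x) x := by
    have := h1.const_add (V a)
    rwa [← hVeq] at this
  rw [(hU x).deriv, h2.deriv]

lemma cs (U V : ℝ → ℝ) (hU : ∀ x, HasDerivAt U (V x) x) (hVc : Continuous V)
    (x y : ℝ) (hxy : x ≤ y) : (U y - U x) ^ 2 ≤ (y - x) * ∫ t in x..y, V t ^ 2 := by
  rcases hxy.eq_or_lt with rfl | hlt
  · simp
  set m := (U y - U x) / (y - x) with hm
  have hp : 0 < y - x := by linarith
  have h1 : ∫ t in x..y, V t = U y - U x :=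
      (intervalIntegral.integral_eq_sub_of_hasDerivAt (fun t _ => hU t)
        (hVc.intervalIntegrable _ _))
  have h0 : 0 ≤ ∫ t in x..y, (V t - m) ^ 2 :=
    intervalIntegral.integral_nonneg hxy (fun t _ => sq_nonneg _)
  have h2 : ∫ t in x..y, (V t - m) ^ 2 = (∫ t in x..y, V t ^ 2) - 2 * m * (U y - U x) + m ^ 2 * (y - x) := by
    have : (fun t => (V t - m) ^ 2) = fun t => (V t ^ 2 - 2 * m * V t) + m ^ 2 := by
      funext t; ring
    rw [this, intervalIntegral.integral_add (Continuous.intervalIntegrable (by fun_prop) _ _)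
      (by simp), intervalIntegral.integral_sub (Continuous.intervalIntegrable (by fun_prop) _ _)
      (Continuous.intervalIntegrable (by fun_prop) _ _), intervalIntegral.integral_const_mul, h1]
    simp [mul_comm]
  have h3 : m * (y - x) = U y - U x := by rw [hm]; field_simp
  rw [h2] at h0
  rw [← h3] at h0 ⊢
  nlinarith

lemma sup_bound (f : ℝ → ℝ) (a b : ℝ) (hab : a < b) (hfm : Measurable f) (C : ℝ)
    (hf : ∀ x : ℝ, 0 ≤ f x ∧ f x ≤ C)
    (hfpos : ∀ᵐ x ∂volume, x ∈ Set.Icc a b → 0 < f x) (ε : ℝ) (hε : 0 < ε) :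
    ∃ Λ : ℝ, 0 ≤ Λ ∧ ∀ lam, Λ ≤ lam → ∀ U V : ℝ → ℝ, (∀ x, HasDerivAt U (V x) x) → Continuous V →
      ∀ x ∈ Set.Icc a b, U x ^ 2 ≤
        ε * ((∫ t in a..b, V t ^ 2) + lam * ∫ t in a..b, f t * U t ^ 2) := by
  have hfi : ∀ x y, IntervalIntegrable f volume x y := fun x y => by
    refine (intervalIntegrable_const (c := C)).mono_fun hfm.aestronglyMeasurable ?_
    refine Eventually.of_forall fun t => ?_
    simp only [Real.norm_eq_abs]
    exact abs_le_abs_of_nonneg (hf t).1 (hf t).2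
  obtain ⟨δ, hδ, hδb, hδε⟩ : ∃ δ : ℝ, 0 < δ ∧ δ ≤ b - a ∧ 2 * δ ≤ ε :=
    ⟨min (b - a) (ε / 2), lt_min (by linarith) (by linarith), min_le_left _ _, by
      linarith [min_le_right (b - a) (ε / 2)]⟩
  have hFc : Continuous fun x => ∫ t in x..x + δ, f t := by
    have h1 := intervalIntegral.continuous_primitive hfi a
    have : (fun x => ∫ t in x..x + δ, f t) =
        fun x => (∫ t in a..x + δ, f t) - ∫ t in a..x, f t := by
      funext x
      rw [intervalIntegral.integral_interval_sub_left (hfi _ _) (hfi _ _)]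
    rw [this]
    exact (h1.comp (continuous_add_const δ)).sub h1
  obtain ⟨x0, hx0, hmin⟩ := (isCompact_Icc (a := a) (b := b - δ)).exists_isMinOn
    (Set.nonempty_Icc.2 (by linarith)) hFc.continuousOn
  set c := ∫ t in x0..x0 + δ, f t with hc
  have hcpos : 0 < c := by
    rw [hc, intervalIntegral.integral_pos_iff_support_of_nonneg_ae'
      (Eventually.of_forall fun t => (hf t).1) (hfi _ _)]
    refine ⟨by linarith, ?_⟩
    have h1 : volume (Set.Ioc x0 (x0 + δ)) ≤ volume (Function.support f ∩ Set.Ioc x0 (x0 + δ)) := by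
      apply measure_mono_ae
      filter_upwards [hfpos] with t ht htm
      refine ⟨(ht ⟨?_, ?_⟩).ne', htm⟩
      · linarith [htm.1, hx0.1]
      · linarith [htm.2, hx0.2]
    refine lt_of_lt_of_le ?_ h1
    simp [hδ]
  refine ⟨2 / (c * ε), by positivity, ?_⟩
  intro lam hlam U V hU hVc x hx
  have hUc : Continuous U := continuous_iff_continuousAt.2 fun x => (hU x).continuousAt
  have hfU : ∀ x y, IntervalIntegrable (fun t => f t * U t ^ 2) volume x y := fun x y =>
    (hfi x y).mul_continuousOn (by fun_prop)
  obtain ⟨p, hp, hxp⟩ : ∃ p ∈ Set.Icc a (b - δ), x ∈ Set.Icc p (p + δ) := by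
    by_cases h : x ≤ b - δ
    · exact ⟨x, ⟨hx.1, h⟩, ⟨le_refl _, by linarith⟩⟩
    · exact ⟨b - δ, ⟨by linarith, le_refl _⟩, ⟨by linarith, by linarith [hx.2]⟩⟩
  have hcp : c ≤ ∫ t in p..p + δ, f t := hmin hp
  set J := ∫ t in p..p + δ, f t with hJ
  have hVV : ∀ x y, IntervalIntegrable (fun t => V t ^ 2) volume x y := fun x y =>
    Continuous.intervalIntegrable (by fun_prop) _ _
  set I := ∫ t in a..b, V t ^ 2 with hI
  have hI0 : 0 ≤ I := intervalIntegral.integral_nonneg hab.le (fun t _ => sq_nonneg _)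
  set F := ∫ t in a..b, f t * U t ^ 2 with hF
  have hF0 : 0 ≤ F := intervalIntegral.integral_nonneg hab.le
    (fun t _ => mul_nonneg (hf t).1 (sq_nonneg _))
  have hle : ∀ s ∈ Set.Icc a b, ∀ t ∈ Set.Icc a b, s ≤ t → t - s ≤ δ →
      (U t - U s) ^ 2 ≤ δ * I := by
    intro s hs t ht hst hd
    have h1 := cs U V hU hVc s t hst
    have h2 : ∫ t in s..t, V t ^ 2 ≤ I :=
      intervalIntegral.integral_mono_interval hs.1 hst ht.2
        (Eventually.of_forall fun t => sq_nonneg _) (hVV _ _)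
    have h3 : 0 ≤ ∫ t in s..t, V t ^ 2 :=
      intervalIntegral.integral_nonneg hst (fun t _ => sq_nonneg _)
    calc _ ≤ _ := h1
      _ ≤ δ * I := mul_le_mul hd h2 h3 hδ.le
  have hpt : ∀ y ∈ Set.Icc p (p + δ), U x ^ 2 ≤ 2 * U y ^ 2 + 2 * (δ * I) := by
    intro y hy
    have hya : y ∈ Set.Icc a b := ⟨hp.1.trans hy.1, by linarith [hy.2, hp.2]⟩
    have h1 : (U x - U y) ^ 2 ≤ δ * I := by
      rcases le_total x y with h | h
      · have := hle x hx y hya h (by linarith [hy.2, hxp.1])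
        nlinarith
      · exact hle y hya x hx h (by linarith [hxp.2, hy.1])
    nlinarith [sq_nonneg (U x - 2 * U y)]
  have hint : U x ^ 2 * J ≤ 2 * (∫ t in p..p + δ, f t * U t ^ 2) + 2 * (δ * I) * J := by
    have h1 : ∫ t in p..p + δ, U x ^ 2 * f t ≤
        ∫ t in p..p + δ, (2 * (f t * U t ^ 2) + 2 * (δ * I) * f t) := by
      refine intervalIntegral.integral_mono_on (by linarith) ((hfi _ _).const_mul _)
        (((hfU _ _).const_mul _).add ((hfi _ _).const_mul _)) ?_
      intro t ht
      have := mul_le_mul_of_nonneg_right (hpt t ht) (hf t).1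
      linarith
    rw [intervalIntegral.integral_add ((hfU _ _).const_mul _) ((hfi _ _).const_mul _)] at h1
    simpa only [intervalIntegral.integral_const_mul] using h1
  have hFp : ∫ t in p..p + δ, f t * U t ^ 2 ≤ F :=
    intervalIntegral.integral_mono_interval hp.1 (by linarith) (by linarith [hp.2])
        (Eventually.of_forall fun t => mul_nonneg (hf t).1 (sq_nonneg _)) (hfU _ _)
  have hcF : 2 ≤ lam * ε * J := by
    rw [div_le_iff₀ (by positivity)] at hlam
    have hl0 : 0 ≤ lam * ε := by
      by_contra hn
      push Not at hn
      nlinarith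
    nlinarith
  have hJpos : 0 < J := lt_of_lt_of_le hcpos hcp
  have : U x ^ 2 * J ≤ ε * (I + lam * F) * J := by
    have h1 : 2 * F ≤ lam * ε * J * F := mul_le_mul_of_nonneg_right hcF hF0
    have h2 : 2 * (δ * I) * J ≤ ε * I * J := by
      have := mul_le_mul_of_nonneg_right hδε (mul_nonneg hI0 hJpos.le)
      linarith
    nlinarith
  exact le_of_mul_le_mul_right this hJpos

lemma small_of_bdd (g f : ℝ → ℝ) (hgm : Measurable g) (G : ℝ) (hG : ∀ x, |g x| ≤ G)
    (a b : ℝ) (hab : a < b) (hfm : Measurable f) (C : ℝ)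
    (hf : ∀ x : ℝ, 0 ≤ f x ∧ f x ≤ C)
    (hfpos : ∀ᵐ x ∂volume, x ∈ Set.Icc a b → 0 < f x)
    (hqi : ∀ (lam : ℝ) (U : ℝ → ℝ), Continuous U → ∀ x y,
      IntervalIntegrable (fun t => (g t + lam * f t) * U t) volume x y)
    (M ρ : ℝ) (hM : 0 ≤ M) (hρ : 0 < ρ) :
    ∃ Λ : ℝ, 0 ≤ Λ ∧ ∀ lam, Λ ≤ lam → ∀ U V : ℝ → ℝ, (∀ x, HasDerivAt U (V x) x) → Continuous V →
      (∀ x y, V x = V y + ∫ t in y..x, (g t + lam * f t) * U t) →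
      U a ^ 2 + V a ^ 2 ≤ M → U b ^ 2 + V b ^ 2 ≤ M →
      ∀ x ∈ Set.Icc a b, U x ^ 2 < ρ := by
  have hG0 : 0 ≤ G := (abs_nonneg _).trans (hG 0)
  have hba : 0 < b - a := by linarith
  set D := 1 + 2 * (G * (b - a)) + 2 * M / ρ with hD
  have hDpos : 0 < D := by positivity
  obtain ⟨Λ, hΛ, H⟩ := sup_bound f a b hab hfm C hf hfpos (1 / D) (by positivity)
  refine ⟨Λ, hΛ, ?_⟩
  intro lam hlam U V hU hVc hV hMa hMb x hx
  have hUc : Continuous U := continuous_iff_continuousAt.2 fun x => (hU x).continuousAt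
  have hs := H lam hlam U V hU hVc
  have hfi : IntervalIntegrable (fun t => f t * U t ^ 2) volume a b := by
    have h1 := (hqi 1 _ (hUc.pow 2) a b).sub (hqi 0 _ (hUc.pow 2) a b)
    refine h1.congr ?_
    exact fun t _ => by simp only [Pi.pow_apply]; ring
  have hgi : IntervalIntegrable (fun t => g t * U t ^ 2) volume a b := by
    refine (hqi 0 _ (hUc.pow 2) a b).congr ?_
    exact fun t _ => by simp only [Pi.pow_apply]; ring
  have hVV : IntervalIntegrable (fun t => V t ^ 2) volume a b :=
    Continuous.intervalIntegrable (by fun_prop) _ _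
  have hpr := prod_rule U V _ hU hVc (hqi lam U hUc) hV a b
  have hsplit : ∫ t in a..b, (V t * V t + U t * ((g t + lam * f t) * U t)) =
      (∫ t in a..b, V t ^ 2) + lam * (∫ t in a..b, f t * U t ^ 2) + ∫ t in a..b, g t * U t ^ 2 := by
    rw [← intervalIntegral.integral_const_mul, ← intervalIntegral.integral_add hVV (hfi.const_mul _),
      ← intervalIntegral.integral_add (hVV.add (hfi.const_mul _)) hgi]
    congr 1; funext t; ring
  set E := (∫ t in a..b, V t ^ 2) + lam * (∫ t in a..b, f t * U t ^ 2) with hE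
  have hgb : -(G * (1 / D * E) * (b - a)) ≤ ∫ t in a..b, g t * U t ^ 2 := by
    have h1 : ∫ t in a..b, (-(G * (1 / D * E))) ≤ ∫ t in a..b, g t * U t ^ 2 := by
      refine intervalIntegral.integral_mono_on hab.le (by simp) hgi ?_
      intro t ht
      have h2 := hs t ht
      have h3 := neg_le_of_abs_le (hG t)
      have h4 := mul_le_mul_of_nonneg_left h2 hG0
      have h5 := mul_le_mul_of_nonneg_right h3 (sq_nonneg (U t))
      linarith
    rw [intervalIntegral.integral_const, smul_eq_mul] at h1
    linarith
  have hEM : E ≤ M + G * (1 / D * E) * (b - a) := by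
    rw [hsplit] at hpr
    nlinarith [sq_nonneg (U b - V b), sq_nonneg (U a + V a)]
  have hx2 := hs x hx
  set s := 1 / D * E with hsdef
  have hEs : E = D * s := by rw [hsdef]; field_simp
  rw [hEs, hD] at hEM
  have hs0 : 0 ≤ s := (sq_nonneg _).trans hx2
  have h1 : 2 * M / ρ * s ≤ M - s := by nlinarith [mul_nonneg (mul_nonneg hG0 hba.le) hs0]
  refine lt_of_le_of_lt hx2 ?_
  by_contra hn
  push Not at hn
  have h2 : 2 * M ≤ 2 * M / ρ * s := by
    rw [div_mul_eq_mul_div, le_div_iff₀ hρ]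
    nlinarith
  linarith

lemma pos_branch (g f : ℝ → ℝ) (G : ℝ) (hG : ∀ x, |g x| ≤ G)
    (a b : ℝ) (hab : a < b) (hf : ∀ x : ℝ, 0 ≤ f x)
    (lam : ℝ) (hlam : 0 ≤ lam) (U V : ℝ → ℝ) (hU : ∀ x, HasDerivAt U (V x) x) (hVc : Continuous V)
    (hqi : ∀ x y, IntervalIntegrable (fun t => (g t + lam * f t) * U t) volume x y)
    (hV : ∀ x y, V x = V y + ∫ t in y..x, (g t + lam * f t) * U t)
    (h0 : U a = 0) (hγ : 0 < V a) (η : ℝ) (hη : G * η * (b - a) ≤ V a / 2)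
    (hUη : ∀ x ∈ Set.Icc a b, |U x| ≤ η) : V a / 4 * (b - a) ≤ U b := by
  have hG0 : 0 ≤ G := (abs_nonneg _).trans (hG 0)
  have hη0 : 0 ≤ η := (abs_nonneg _).trans (hUη a (Set.left_mem_Icc.2 hab.le))
  have hUi : ∀ x, U x = ∫ t in a..x, V t := fun x => by
    rw [intervalIntegral.integral_eq_sub_of_hasDerivAt (fun t _ => hU t)
        (hVc.intervalIntegrable _ _), h0, sub_zero]
  have key : ∀ x ∈ Set.Icc a b, V a / 4 ≤ V x := by
    by_contra hn
    push Not at hn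
    obtain ⟨x1, hx1, hlt⟩ := hn
    have hcomp : IsCompact (Set.Icc a b ∩ {x | V x ≤ V a / 4}) :=
      isCompact_Icc.inter_right (isClosed_le hVc continuous_const)
    obtain ⟨t, ⟨htm, htv⟩, hmin⟩ := hcomp.exists_isLeast ⟨x1, hx1, hlt.le⟩
    simp only [Set.mem_ofPred_eq] at htv
    have hpos : ∀ s ∈ Set.Icc a t, 0 ≤ U s := by
      intro s hs
      rcases hs.2.eq_or_lt with rfl | hst
      · -- endpoint
        rw [hUi]
        refine intervalIntegral.integral_nonneg_of_ae_restrict hs.1 ?_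
        rw [EventuallyLE, ← restrict_Ioo_eq_restrict_Icc, ae_restrict_iff' measurableSet_Ioo]
        refine Eventually.of_forall fun r hr => ?_
        by_contra hn
        simp only [Pi.zero_apply] at hn
        have := hmin (show r ∈ _ from ⟨⟨hr.1.le, hr.2.le.trans htm.2⟩, by
          simp only [Set.mem_ofPred_eq]; linarith⟩)
        linarith [hr.2]
      · rw [hUi]
        refine intervalIntegral.integral_nonneg hs.1 fun r hr => ?_
        by_contra hn
        have := hmin (show r ∈ _ from ⟨⟨hr.1, by linarith [hr.2, htm.2]⟩, by
          simp only [Set.mem_ofPred_eq]; linarith⟩)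
        linarith [hr.2]
    have h1 : ∫ s in a..t, (-(G * η)) ≤ ∫ s in a..t, (g s + lam * f s) * U s := by
      refine intervalIntegral.integral_mono_on htm.1 (by simp) (hqi _ _) ?_
      intro s hs
      have hp := hpos s hs
      have hle := (abs_le.1 (hUη s ⟨hs.1, hs.2.trans htm.2⟩)).2
      have h3 := neg_le_of_abs_le (hG s)
      have h4 := mul_le_mul_of_nonneg_right h3 hp
      have h5 := mul_le_mul_of_nonneg_left hle hG0
      have h6 := mul_nonneg (mul_nonneg hlam (hf s)) hp
      linarith
    rw [intervalIntegral.integral_const, smul_eq_mul] at h1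
    have h2 := hV t a
    have h3 : (t - a) * (G * η) ≤ (b - a) * (G * η) :=
      mul_le_mul_of_nonneg_right (by linarith [htm.2]) (mul_nonneg hG0 hη0)
    linarith
  have h1 : ∫ s in a..b, V a / 4 ≤ ∫ s in a..b, V s :=
    intervalIntegral.integral_mono_on hab.le (by simp) (hVc.intervalIntegrable _ _) key
  rw [← hUi, intervalIntegral.integral_const, smul_eq_mul] at h1
  linarith

lemma core_s10 (g f : ℝ → ℝ) (hgm : Measurable g) (G : ℝ) (hG : ∀ x, |g x| ≤ G)
    (a b : ℝ) (hab : a < b) (hfm : Measurable f) (C : ℝ)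
    (hf : ∀ x : ℝ, 0 ≤ f x ∧ f x ≤ C)
    (hfpos : ∀ᵐ x ∂volume, x ∈ Set.Icc a b → 0 < f x)
    (hqi : ∀ (lam : ℝ) (U : ℝ → ℝ), Continuous U → ∀ x y,
      IntervalIntegrable (fun t => (g t + lam * f t) * U t) volume x y)
    (α γ : ℝ) (hne : α ≠ 0 ∨ γ ≠ 0) (M : ℝ) (hM : 0 ≤ M) :
    ∃ Λ : ℝ, 0 ≤ Λ ∧ ∀ lam, Λ ≤ lam → ∀ U V : ℝ → ℝ, (∀ x, HasDerivAt U (V x) x) → Continuous V →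
      (∀ x y, V x = V y + ∫ t in y..x, (g t + lam * f t) * U t) →
      U a = α → V a = γ → M < U b ^ 2 + V b ^ 2 := by
  have hG0 : 0 ≤ G := (abs_nonneg _).trans (hG 0)
  have hba : 0 < b - a := by linarith
  have sm := fun ρ hρ => small_of_bdd g f hgm G hG a b hab hfm C hf hfpos hqi
    (M + (α ^ 2 + γ ^ 2)) ρ (by positivity) hρ
  by_cases hα : α = 0
  · have hγ : γ ≠ 0 := by tauto
    have hγp : 0 < |γ| := abs_pos.2 hγ
    obtain ⟨η, hη, h1, h2⟩ : ∃ η : ℝ, 0 < η ∧ G * η * (b - a) ≤ |γ| / 2 ∧ η < |γ| / 4 * (b - a) := by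
      refine ⟨min (|γ| / 2 / (G * (b - a) + 1)) (|γ| / 8 * (b - a)), by positivity, ?_, ?_⟩
      · have := min_le_left (|γ| / 2 / (G * (b - a) + 1)) (|γ| / 8 * (b - a))
        have hp : 0 < G * (b - a) + 1 := by positivity
        have hp2 : 0 ≤ min (|γ| / 2 / (G * (b - a) + 1)) (|γ| / 8 * (b - a)) := by positivity
        rw [le_div_iff₀ hp] at this
        nlinarith
      · have := min_le_right (|γ| / 2 / (G * (b - a) + 1)) (|γ| / 8 * (b - a))
        have : 0 < |γ| * (b - a) := by positivity
        linarith
    obtain ⟨Λ, hΛ, H⟩ := sm (η ^ 2) (by positivity)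
    refine ⟨Λ, hΛ, fun lam hlam U V hU hVc hV hUa hVa => ?_⟩
    by_contra hn
    push Not at hn
    have hUc : Continuous U := continuous_iff_continuousAt.2 fun x => (hU x).continuousAt
    have hsmall := H lam hlam U V hU hVc hV (by rw [hUa, hVa]; linarith)
      (by nlinarith [sq_nonneg α, sq_nonneg γ])
    have hUη : ∀ x ∈ Set.Icc a b, |U x| ≤ η := fun x hx =>
      abs_le_of_sq_le_sq (hsmall x hx).le hη.le
    have hb := hUη b (Set.right_mem_Icc.2 hab.le)
    rcases lt_or_gt_of_ne hγ with hneg | hpos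
    · rw [abs_of_neg hneg] at h1 h2
      have := pos_branch g f G hG a b hab (fun x => (hf x).1) lam (hΛ.trans hlam)
        (fun x => -U x) (fun x => -V x) (fun x => (hU x).neg) hVc.neg
        (hqi lam _ hUc.neg) (fun x y => by
          rw [hV x y]
          simp only [mul_neg, intervalIntegral.integral_neg]; ring) (by simp [hUa, hα])
        (by simp only [hVa]; linarith) η (by simp only [hVa]; linarith)
        (fun x hx => by simpa using hUη x hx)
      simp only [hVa] at this
      linarith [(abs_le.1 hb).1]
    · rw [abs_of_pos hpos] at h1 h2
      have := pos_branch g f G hG a b hab (fun x => (hf x).1) lam (hΛ.trans hlam)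
        U V hU hVc (hqi lam _ hUc) hV (by rw [hUa, hα])
        (by rw [hVa]; exact hpos) η (by rw [hVa]; linarith) hUη
      rw [hVa] at this
      linarith [(abs_le.1 hb).2]
  · obtain ⟨Λ, hΛ, H⟩ := sm (α ^ 2) (by positivity)
    refine ⟨Λ, hΛ, fun lam hlam U V hU hVc hV hUa hVa => ?_⟩
    by_contra hn
    push Not at hn
    have := H lam hlam U V hU hVc hV (by rw [hUa, hVa]; linarith)
      (by nlinarith [sq_nonneg α, sq_nonneg γ]) a (Set.left_mem_Icc.2 hab.le)
    rw [hUa] at this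
    exact lt_irrefl _ this

/-- Large coupling limit of the Prüfer amplitude: `R(0,λ)² = u_λ(0)² + v_λ(0)² → ∞`
as `λ → ∞`. -/
theorem prufer_amplitude_large_coupling (g f : ℝ → ℝ)
    (hgm : Measurable g) (hgb : ∃ Cg : ℝ, ∀ x : ℝ, |g x| ≤ Cg)
    (a b : ℝ) (ha : -1 ≤ a) (hab : a < b) (hb : b ≤ 0)
    (hfm : Measurable f) (C : ℝ)
    (hf : ∀ x : ℝ, 0 ≤ f x ∧ f x ≤ C)
    (hfpos : ∀ᵐ x ∂volume, x ∈ Set.Icc a b → 0 < f x)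
    (hfzero : ∀ x : ℝ, x ∉ Set.Icc a b → f x = 0)
    (β : ℝ) (u v : ℝ → ℝ → ℝ)
    (hu : ∀ (lam : ℝ) (x : ℝ), HasDerivAt (fun s => u s lam) (v x lam) x)
    (hv : ∀ (lam : ℝ) (x y : ℝ),
      v x lam = v y lam + ∫ t in y..x, (g t + lam * f t) * u t lam)
    (hu0 : ∀ lam : ℝ, u (-1) lam = Real.sin β)
    (hv0 : ∀ lam : ℝ, v (-1) lam = Real.cos β) :
    Tendsto (fun lam : ℝ => u 0 lam ^ 2 + v 0 lam ^ 2) atTop atTop := by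
  obtain ⟨G, hG⟩ := hgb
  have hG0 : 0 ≤ G := (abs_nonneg _).trans (hG 0)
  have hqi : ∀ (lam : ℝ) (U : ℝ → ℝ), Continuous U → ∀ x y,
      IntervalIntegrable (fun t => (g t + lam * f t) * U t) volume x y := by
    intro lam U hUc x y
    have hgi : IntervalIntegrable g volume x y := by
      refine (intervalIntegrable_const (c := G)).mono_fun hgm.aestronglyMeasurable ?_
      refine Eventually.of_forall fun t => ?_
      simp only [Real.norm_eq_abs]
      exact (hG t).trans (le_abs_self _)
    have hfi : IntervalIntegrable f volume x y := by
      refine (intervalIntegrable_const (c := C)).mono_fun hfm.aestronglyMeasurable ?_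
      refine Eventually.of_forall fun t => ?_
      simp only [Real.norm_eq_abs]
      exact abs_le_abs_of_nonneg (hf t).1 (hf t).2
    exact (hgi.add (hfi.const_mul lam)).mul_continuousOn hUc.continuousOn
  have hgi : ∀ (U : ℝ → ℝ), Continuous U → ∀ x y,
      IntervalIntegrable (fun t => g t * U t) volume x y := by
    intro U hUc x y
    simpa using hqi 0 U hUc x y
  have huc : ∀ lam, Continuous (fun s => u s lam) := fun lam =>
    continuous_iff_continuousAt.2 fun x => (hu lam x).continuousAt
  have hvc : ∀ lam, Continuous (fun s => v s lam) := fun lam => by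
    have h1 := intervalIntegral.continuous_primitive (hqi lam _ (huc lam)) 0
    have : (fun s => v s lam) = fun s => v 0 lam + ∫ t in (0:ℝ)..s, (g t + lam * f t) * u t lam :=
      funext fun s => hv lam s 0
    rw [this]
    exact continuous_const.add h1
  -- off the support
  have hoff : ∀ lam x y, x ≤ y → (y ≤ a ∨ b ≤ x) →
      v y lam - v x lam = ∫ t in x..y, g t * u t lam := by
    intro lam x y hxy hor
    rw [hv lam y x, add_sub_cancel_left]
    apply intervalIntegral.integral_congr_ae
    have hne : ∀ᵐ t ∂(volume : Measure ℝ), t ≠ a := by simp [ae_iff, measure_singleton]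
    filter_upwards [hne] with t hta ht
    rw [Set.uIoc_of_le hxy] at ht
    have : f t = 0 := by
      apply hfzero
      rintro ⟨h1, h2⟩
      rcases hor with h | h
      · exact hta (le_antisymm (ht.2.trans h) h1)
      · linarith [ht.1]
    rw [this]; ring
  have hgbd : ∀ (U : ℝ → ℝ), Continuous U → ∀ x y, x ≤ y →
      |∫ t in x..y, g t * U t| ≤ G * ∫ t in x..y, |U t| := by
    intro U hUc x y hxy
    refine (intervalIntegral.abs_integral_le_integral_abs hxy).trans ?_
    rw [← intervalIntegral.integral_const_mul]
    refine intervalIntegral.integral_mono_on hxy (hgi U hUc x y).abs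
      (Continuous.intervalIntegrable (by fun_prop) _ _) ?_
    intro t _
    rw [abs_mul]
    exact mul_le_mul_of_nonneg_right (hG t) (abs_nonneg _)
  -- data at a independent of lam
  have hdata : ∀ lam, u a lam = u a 0 ∧ v a lam = v a 0 := by
    intro lam
    have hdc : Continuous fun s => u s lam - u s 0 := (huc lam).sub (huc 0)
    have h1 := (growth (fun s => u s lam - u s 0) (fun s => v s lam - v s 0)
      (fun x => (hu lam x).sub (hu 0 x)) ((hvc lam).sub (hvc 0)) G (-1) a hG0 ha (by
        intro x hx y hy hxy
        have e1 := hoff lam x y hxy (Or.inl hy.2)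
        have e2 := hoff 0 x y hxy (Or.inl hy.2)
        have e3 : (v y lam - v y 0) - (v x lam - v x 0) =
            ∫ t in x..y, g t * (u t lam - u t 0) := by
          simp only [mul_sub]
          rw [intervalIntegral.integral_sub (hgi _ (huc lam) x y) (hgi _ (huc 0) x y), ← e1, ← e2]
          ring
        rw [e3]
        exact hgbd _ hdc x y hxy)).1
    simp only [hu0, hv0, sub_self, abs_zero, add_zero, zero_mul] at h1
    have p1 := abs_nonneg (u a lam - u a 0)
    have p2 := abs_nonneg (v a lam - v a 0)
    exact ⟨sub_eq_zero.1 (abs_eq_zero.1 (by linarith)), sub_eq_zero.1 (abs_eq_zero.1 (by linarith))⟩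
  have hne : u a 0 ≠ 0 ∨ v a 0 ≠ 0 := by
    by_contra hn
    push Not at hn
    have h1 := (growth (fun s => u s 0) (fun s => v s 0) (hu 0) (hvc 0) G (-1) a hG0 ha (by
        intro x hx y hy hxy
        rw [hoff 0 x y hxy (Or.inl hy.2)]
        exact hgbd _ (huc 0) x y hxy)).2
    simp only [hu0, hv0, hn.1, hn.2, abs_zero, add_zero, zero_mul] at h1
    have p1 := abs_nonneg (Real.sin β)
    have p2 := abs_nonneg (Real.cos β)
    have e1 : Real.sin β = 0 := abs_eq_zero.1 (by linarith)
    have e2 : Real.cos β = 0 := abs_eq_zero.1 (by linarith)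
    have := Real.sin_sq_add_cos_sq β
    rw [e1, e2] at this
    norm_num at this
  rw [tendsto_atTop]
  intro M
  set X := Real.exp ((1 + G) * (0 - b)) with hX
  obtain ⟨Λ, hΛ, H⟩ := core_s10 g f hgm G hG a b hab hfm C hf hfpos hqi (u a 0) (v a 0) hne
    (2 * |M| * X ^ 2) (by positivity)
  filter_upwards [eventually_ge_atTop Λ] with lam hlam
  have h1 := H lam hlam (fun s => u s lam) (fun s => v s lam) (hu lam) (hvc lam) (hv lam)
    (hdata lam).1 (hdata lam).2
  have h2 := (growth (fun s => u s lam) (fun s => v s lam) (hu lam) (hvc lam) G b 0 hG0 hb (by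
        intro x hx y hy hxy
        rw [hoff lam x y hxy (Or.inr hx.1)]
        exact hgbd _ (huc lam) x y hxy)).2
  rw [← hX] at h2
  have hXp : 0 < X := Real.exp_pos _
  by_contra hn
  push Not at hn
  have p1 := abs_nonneg (u b lam)
  have p2 := abs_nonneg (v b lam)
  have h3 : (|u b lam| + |v b lam|) ^ 2 ≤ ((|u 0 lam| + |v 0 lam|) * X) ^ 2 :=
    pow_le_pow_left₀ (by positivity) h2 2
  have h4 : u b lam ^ 2 + v b lam ^ 2 ≤ (|u b lam| + |v b lam|) ^ 2 := by
    rw [← sq_abs (u b lam), ← sq_abs (v b lam)]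
    nlinarith [mul_nonneg p1 p2]
  have h5 : (|u 0 lam| + |v 0 lam|) ^ 2 ≤ 2 * (u 0 lam ^ 2 + v 0 lam ^ 2) := by
    rw [← sq_abs (u 0 lam), ← sq_abs (v 0 lam)]
    nlinarith [sq_nonneg (|u 0 lam| - |v 0 lam|)]
  have h6 : (|u 0 lam| + |v 0 lam|) ^ 2 * X ^ 2 ≤ 2 * |M| * X ^ 2 :=
    mul_le_mul_of_nonneg_right (by linarith [le_abs_self M]) (by positivity)
  rw [mul_pow] at h3
  linarith
end

section
/- Let g : ℝ → ℝ be bounded and measurable, let [a, b] ⊆ [−1, 0] with a < b, and let f : ℝ → ℝ be measurable with 0 ≤ f(x) ≤ C for all x and some constant C < ∞, f(x) > 0 for almost every x ∈ [a, b], and f(x) = 0 for all x ∉ [a, b]. Let θ ∈ [0, π), and for each λ ∈ ℝ let (u(·,λ), v(·,λ)) be the solution of −u″ + (g + λ·f)·u = 0 with u(a,λ) = sin θ and v(a,λ) = cos θ, and let (R(·,λ), φ(·,λ)) be Prüfer variables for it with φ(a,λ) = θ. Then there exist λ₀ ∈ ℝ and η ∈ (0, π) such that φ(x,λ) < η for all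 λ ≥ λ₀ and all x ∈ [a, b]. -/
open MeasureTheory

theorem locInt_interval (h : ℝ → ℝ) (hf : LocallyIntegrable h volume) (x y : ℝ) :
    IntervalIntegrable h volume x y :=
  intervalIntegrable_iff.mpr <|
    (hf.integrableOn_isCompact isCompact_uIcc).mono_set Set.uIoc_subset_uIcc

/-- Riccati lower bound for `v / u`. -/
theorem riccati_lower (q u v F : ℝ → ℝ) (x₀ x₁ K : ℝ) (h01 : x₀ ≤ x₁)
    (hqm : Measurable q) (hqb : ∀ x, |q x| ≤ K)
    (hu : ∀ x, HasDerivAt u (v x) x)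
    (hv : ∀ x y, v x = v y + ∫ t in y..x, q t * u t)
    (hpos : ∀ x ∈ Set.Icc x₀ x₁, 0 < u x)
    (hF : IntervalIntegrable F volume x₀ x₁)
    (hle : ∀ x ∈ Set.Icc x₀ x₁, -F x ≤ q x - (v x / u x) ^ 2) :
    -∫ t in x₀..x₁, F t ≤ v x₁ / u x₁ - v x₀ / u x₀ := by
  have huc : Continuous u := continuous_iff_continuousAt.2 fun x => (hu x).continuousAt
  have hq : LocallyIntegrable q volume := by
    refine (locallyIntegrable_const K).mono hqm.aestronglyMeasurable ?_
    refine Filter.Eventually.of_forall fun x => ?_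
    rw [Real.norm_eq_abs, Real.norm_eq_abs]
    exact (hqb x).trans (le_abs_self K)
  have hint : ∀ x y, IntervalIntegrable (fun t => q t * u t) volume x y := by
    intro x y
    exact (locInt_interval _ hq x y).mul_continuousOn huc.continuousOn
  have hvac : AbsolutelyContinuousOnInterval v x₀ x₁ := by
    have h1 := (hint x₀ x₁).absolutelyContinuousOnInterval_intervalIntegral
      (c := x₀) (by simp)
    have h2 : AbsolutelyContinuousOnInterval (fun _ : ℝ => v x₀) x₀ x₁ :=
      contDiffOn_const.absolutelyContinuousOnInterval
    have h3 := h2.add h1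
    have h4 : v = (fun _ : ℝ => v x₀) + fun x => ∫ t in x₀..x, q t * u t := by
      funext x
      exact hv x x₀
    rw [h4]
    exact h3
  have hvc : Continuous v := by
    have : v = fun x => v x₀ + ∫ t in x₀..x, q t * u t := by
      funext x; exact hv x x₀
    rw [this]
    exact continuous_const.add (intervalIntegral.continuous_primitive (fun x y => hint x y) x₀)
  have hu1 : ContDiff ℝ 1 u := by
    rw [contDiff_one_iff_deriv]
    refine ⟨fun x => (hu x).differentiableAt, ?_⟩
    have : deriv u = v := by funext x; exact (hu x).deriv
    rw [this]; exact hvc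
  have hui : AbsolutelyContinuousOnInterval (fun x => (u x)⁻¹) x₀ x₁ := by
    apply ContDiffOn.absolutelyContinuousOnInterval
    rw [Set.uIcc_of_le h01]
    exact hu1.contDiffOn.inv fun x hx => (hpos x hx).ne'
  have hm := hvac.fun_mul hui
  have hFTC := hm.integral_deriv_eq_sub
  have hmi := hm.intervalIntegrable_deriv
  have hder := (hint x₀ x₁).ae_hasDerivAt_integral
  have : ∫ t in x₀..x₁, -F t ≤ ∫ t in x₀..x₁, deriv (fun x => v x * (u x)⁻¹) t := by
    apply intervalIntegral.integral_mono_ae_restrict h01 hF.neg hmi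
    rw [Filter.EventuallyLE, ae_restrict_iff' measurableSet_Icc]
    filter_upwards [hder] with x hx hxI
    rw [Set.uIcc_of_le h01] at hx
    have h1 := hx hxI x₀ (Set.left_mem_Icc.2 h01)
    have h2 : HasDerivAt v (q x * u x) x := by
      have := h1.const_add (v x₀)
      have h4 : v = fun x => v x₀ + ∫ t in x₀..x, q t * u t := by
        funext y
        exact hv y x₀
      rw [h4]
      exact this
    have hp := hpos x hxI
    have h3 := (h2.mul ((hu x).inv hp.ne')).deriv
    have h4 : deriv (fun x => v x * (u x)⁻¹) x = q x - (v x / u x) ^ 2 := by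
      refine Eq.trans h3 ?_
      simp
      field_simp
      ring
    rw [h4]
    exact hle x hxI
  rw [hFTC, intervalIntegral.integral_neg] at this
  simpa [div_eq_mul_inv] using this

/-- Dominated convergence choice of the coupling. -/
theorem choose_coupling (f : ℝ → ℝ) (a b B d : ℝ) (hab : a < b) (hB : 0 ≤ B) (hd : 0 < d)
    (hfm : Measurable f) (hf : ∀ x, 0 ≤ f x)
    (hfpos : ∀ᵐ x ∂volume, x ∈ Set.Icc a b → 0 < f x) :
    ∃ n : ℕ, ∫ x in a..b, max 0 (B - n * f x) < d := by
  have h : Filter.Tendsto (fun n : ℕ => ∫ x in a..b, max 0 (B - n * f x)) Filter.atTop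
      (nhds (∫ x in a..b, (0 : ℝ))) := by
    apply intervalIntegral.tendsto_integral_filter_of_dominated_convergence (fun _ => B)
    · refine Filter.Eventually.of_forall fun n => ?_
      exact (measurable_const.max (measurable_const.sub (hfm.const_mul _))).aestronglyMeasurable
    · refine Filter.Eventually.of_forall fun n => Filter.Eventually.of_forall fun x _ => ?_
      rw [Real.norm_eq_abs, abs_of_nonneg (le_max_left _ _)]
      have : 0 ≤ (n : ℝ) * f x := mul_nonneg n.cast_nonneg (hf x)
      exact max_le hB (by linarith)
    · exact intervalIntegrable_const
    · filter_upwards [hfpos] with x hx hxI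
      rw [Set.uIoc_of_le hab.le] at hxI
      have hp := hx ⟨hxI.1.le, hxI.2⟩
      apply tendsto_const_nhds.congr'
      obtain ⟨N, hN⟩ := exists_nat_ge (B / f x)
      filter_upwards [Filter.eventually_ge_atTop N] with n hn
      have : B / f x ≤ n := hN.trans (by exact_mod_cast hn)
      rw [div_le_iff₀ hp] at this
      rw [max_eq_left]; linarith
  rw [intervalIntegral.integral_zero] at h
  exact (h.eventually_lt_const hd).exists

/-- Extracting a crossing interval. -/
theorem crossing (φ : ℝ → ℝ) (hφ : Continuous φ) (a x α β : ℝ) (hax : a ≤ x)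
    (hαβ : α < β) (h0 : φ a ≤ α) (h1 : β ≤ φ x) :
    ∃ x₀ x₁, a ≤ x₀ ∧ x₀ ≤ x₁ ∧ x₁ ≤ x ∧ φ x₀ = α ∧ φ x₁ = β ∧
      ∀ y ∈ Set.Icc x₀ x₁, α ≤ φ y ∧ φ y ≤ β := by
  obtain ⟨x₀, ⟨⟨hx0a, hx0x⟩, hx0⟩, hmax⟩ :=
    (isCompact_Icc.inter_right (isClosed_le hφ continuous_const) :
      IsCompact (Set.Icc a x ∩ {y | φ y ≤ α})).exists_isGreatest ⟨a, ⟨le_rfl, hax⟩, h0⟩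
  have hx0 : φ x₀ ≤ α := hx0
  obtain ⟨x₁, ⟨⟨hx1a, hx1x⟩, hx1⟩, hmin⟩ :=
    (isCompact_Icc.inter_right (isClosed_le continuous_const hφ) :
      IsCompact (Set.Icc x₀ x ∩ {y | β ≤ φ y})).exists_isLeast ⟨x, ⟨hx0x, le_rfl⟩, h1⟩
  have hx1 : β ≤ φ x₁ := hx1
  have e0 : φ x₀ = α := by
    obtain ⟨z, hz, hzα⟩ := intermediate_value_Icc hx0x hφ.continuousOn
      (show α ∈ Set.Icc (φ x₀) (φ x) from ⟨hx0, by linarith⟩)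
    have : z ≤ x₀ := hmax ⟨⟨hx0a.trans hz.1, hz.2⟩, hzα.le⟩
    rw [le_antisymm hz.1 this, hzα]
  have e1 : φ x₁ = β := by
    obtain ⟨z, hz, hzβ⟩ := intermediate_value_Icc hx1a hφ.continuousOn
      (show β ∈ Set.Icc (φ x₀) (φ x₁) from ⟨by linarith, hx1⟩)
    have : x₁ ≤ z := hmin ⟨⟨hz.1, hz.2.trans hx1x⟩, hzβ.ge⟩
    rw [le_antisymm this hz.2, hzβ]
  refine ⟨x₀, x₁, hx0a, hx1a, hx1x, e0, e1, fun y hy => ⟨?_, ?_⟩⟩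
  · by_contra hc
    push Not at hc
    have : y ≤ x₀ := hmax ⟨⟨hx0a.trans hy.1, hy.2.trans hx1x⟩, hc.le⟩
    rw [le_antisymm this hy.1] at hc
    linarith
  · by_contra hc
    push Not at hc
    have : x₁ ≤ y := hmin ⟨⟨hy.1, hy.2.trans hx1x⟩, hc.le⟩
    rw [le_antisymm hy.2 this] at hc
    linarith

/-- Uniform upper bound on the Prüfer phase on `[a,b]` for large coupling:
there are `λ₀` and `η ∈ (0,π)` with `φ(x,λ) < η` for all `λ ≥ λ₀` and `x ∈ [a,b]`. -/
theorem prufer_phase_uniform_bound (g f : ℝ → ℝ)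
    (hgm : Measurable g) (hgb : ∃ Cg : ℝ, ∀ x : ℝ, |g x| ≤ Cg)
    (a b : ℝ) (ha : -1 ≤ a) (hab : a < b) (hb : b ≤ 0)
    (hfm : Measurable f) (C : ℝ)
    (hf : ∀ x : ℝ, 0 ≤ f x ∧ f x ≤ C)
    (hfpos : ∀ᵐ x ∂volume, x ∈ Set.Icc a b → 0 < f x)
    (hfzero : ∀ x : ℝ, x ∉ Set.Icc a b → f x = 0)
    (θ : ℝ) (hθ0 : 0 ≤ θ) (hθπ : θ < Real.pi)
    (u v R φ : ℝ → ℝ → ℝ)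
    (hu : ∀ (lam : ℝ) (x : ℝ), HasDerivAt (fun s => u s lam) (v x lam) x)
    (hv : ∀ (lam : ℝ) (x y : ℝ),
      v x lam = v y lam + ∫ t in y..x, (g t + lam * f t) * u t lam)
    (hu0 : ∀ lam : ℝ, u a lam = Real.sin θ)
    (hv0 : ∀ lam : ℝ, v a lam = Real.cos θ)
    (hR : ∀ x lam : ℝ, 0 < R x lam)
    (hφc : ∀ lam : ℝ, Continuous fun x => φ x lam)
    (huR : ∀ x lam : ℝ, u x lam = R x lam * Real.sin (φ x lam))
    (hvR : ∀ x lam : ℝ, v x lam = R x lam * Real.cos (φ x lam))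
    (hφ0 : ∀ lam : ℝ, φ a lam = θ) :
    ∃ lam₀ : ℝ, ∃ η ∈ Set.Ioo 0 Real.pi,
      ∀ lam ≥ lam₀, ∀ x ∈ Set.Icc a b, φ x lam < η := by
  obtain ⟨G, hG⟩ := hgb
  have hG0 : 0 ≤ G := (abs_nonneg _).trans (hG 0)
  have hC0 : 0 ≤ C := (hf 0).1.trans (hf 0).2
  have hpi := Real.pi_pos
  obtain ⟨α, hα⟩ : ∃ α, α = (θ + Real.pi) / 2 := ⟨_, rfl⟩
  obtain ⟨η, hη⟩ : ∃ η, η = (α + Real.pi) / 2 := ⟨_, rfl⟩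
  have hα1 : θ < α := by linarith
  have hα2 : Real.pi / 2 ≤ α := by linarith
  have hαη : α < η := by linarith
  have hηπ : η < Real.pi := by linarith
  have hsη : 0 < Real.sin η := Real.sin_pos_of_pos_of_lt_pi (by linarith) hηπ
  have hsα : 0 < Real.sin α := Real.sin_pos_of_pos_of_lt_pi (by linarith) (by linarith)
  obtain ⟨d, hd⟩ : ∃ d, d = Real.cos α / Real.sin α - Real.cos η / Real.sin η := ⟨_, rfl⟩
  have hd0 : 0 < d := by
    have h1 : 0 < Real.sin (η - α) :=
      Real.sin_pos_of_pos_of_lt_pi (by linarith) (by linarith)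
    rw [Real.sin_sub] at h1
    rw [hd, div_sub_div _ _ hsα.ne' hsη.ne']
    apply div_pos _ (mul_pos hsα hsη)
    linarith
  obtain ⟨M, hM⟩ : ∃ M, M = 1 / Real.sin η ^ 2 := ⟨_, rfl⟩
  have hM0 : 0 < M := by rw [hM]; positivity
  obtain ⟨n, hn⟩ := choose_coupling f a b (G + M) d hab (by linarith) hd0 hfm
    (fun x => (hf x).1) hfpos
  refine ⟨n, η, ⟨by linarith, hηπ⟩, fun lam hlam x hx => ?_⟩
  by_contra hcon
  push Not at hcon
  obtain ⟨x₀, x₁, hax0, h01, hx1x, e0, e1, hbd⟩ := crossing (fun x => φ x lam) (hφc lam) a x α η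
    hx.1 hαη (by simp only [hφ0]; exact hα1.le) hcon
  have hn0 : (0 : ℝ) ≤ n := n.cast_nonneg
  have hlam0 : 0 ≤ lam := hn0.trans hlam
  have hspos : ∀ y ∈ Set.Icc x₀ x₁, 0 < Real.sin (φ y lam) := fun y hy =>
    Real.sin_pos_of_pos_of_lt_pi (by linarith [(hbd y hy).1]) (by linarith [(hbd y hy).2])
  have hm : ∀ y, v y lam / u y lam = Real.cos (φ y lam) / Real.sin (φ y lam) := fun y => by
    rw [huR, hvR, mul_div_mul_left _ _ (hR y lam).ne']
  have hFm : Measurable fun x => max 0 (G + M - n * f x) :=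
    measurable_const.max (measurable_const.sub (hfm.const_mul _))
  have hFl : LocallyIntegrable (fun x => max 0 (G + M - n * f x)) volume := by
    refine (locallyIntegrable_const (G + M)).mono hFm.aestronglyMeasurable ?_
    refine Filter.Eventually.of_forall fun x => ?_
    rw [Real.norm_eq_abs, Real.norm_eq_abs, abs_of_nonneg (le_max_left _ _)]
    have : 0 ≤ (n : ℝ) * f x := mul_nonneg hn0 (hf x).1
    exact (max_le (by linarith) (by linarith)).trans (le_abs_self _)
  have key := riccati_lower (fun t => g t + lam * f t) (fun t => u t lam) (fun t => v t lam)
    (fun x => max 0 (G + M - n * f x)) x₀ x₁ (G + lam * C) h01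
    (hgm.add (hfm.const_mul _))
    (fun y => by
      refine (abs_add_le _ _).trans (add_le_add (hG y) ?_)
      rw [abs_of_nonneg (mul_nonneg hlam0 (hf y).1)]
      exact mul_le_mul_of_nonneg_left (hf y).2 hlam0)
    (hu lam) (hv lam)
    (fun y hy => by
      show 0 < u y lam
      rw [huR]; exact mul_pos (hR y lam) (hspos y hy))
    (locInt_interval _ hFl _ _)
    (fun y hy => by
      show _ ≤ g y + lam * f y - (v y lam / u y lam) ^ 2
      rw [hm]
      have hs := hspos y hy
      have hsle : Real.sin η ≤ Real.sin (φ y lam) := by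
        rw [← Real.sin_pi_sub η, ← Real.sin_pi_sub (φ y lam)]
        have := hbd y hy
        apply Real.sin_le_sin_of_le_of_le_pi_div_two <;> linarith [this.1, this.2]
      have h1 : (Real.cos (φ y lam) / Real.sin (φ y lam)) ^ 2 ≤ M := by
        rw [hM, div_pow]
        apply div_le_div₀ zero_le_one (Real.cos_sq_le_one _) (by positivity)
        gcongr
      have h2 := (abs_le.1 (hG y)).1
      have h3 : (n : ℝ) * f y ≤ lam * f y := mul_le_mul_of_nonneg_right hlam (hf y).1
      have h4 := le_max_right 0 (G + M - n * f y)
      linarith)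
  have hmono : ∫ t in x₀..x₁, max 0 (G + M - n * f t) ≤ ∫ t in a..b, max 0 (G + M - n * f t) :=
    intervalIntegral.integral_mono_interval hax0 h01 (hx1x.trans hx.2)
      (Filter.Eventually.of_forall fun t => le_max_left _ _) (locInt_interval _ hFl _ _)
  simp only [hm] at key
  rw [e0, e1] at key
  linarith
end

section
/- Let g : ℝ → ℝ be bounded and measurable, let [a, b] ⊆ [−1, 0] with a < b, and let f : ℝ → ℝ be measurable with 0 ≤ f(x) ≤ C for all x and some constant C < ∞, f(x) > 0 for almost every x ∈ [a, b], and f(x) = 0 for all x ∉ [a, b]. Let θ ∈ [0, π), and for each λ ∈ ℝ let (u(·,λ), v(·,λ)) be the solution of −u″ + (g + λ·f)·u = 0 with u(a,λ) = sin θ and v(a,λ) = cos θ, and let (R(·,λ), φ(·,λ)) be Prüfer variables for it with φ(a,λ) = θ. For λ > 0 set N_λ := { x ∈ [a, b] : φ(x,λ) ≥ π/4 }. Then (i) the Lebesgue measure |N_λ| tends to 0 as λ → ∞, and (ii) sup_{λ > 0} λ·∫_{N_λ} f(x) dx < ∞. -/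
open MeasureTheory Filter

theorem ric_aux (q u v : ℝ → ℝ) (hq : ∀ x y, IntervalIntegrable q volume x y)
    (hu : ∀ x, HasDerivAt u (v x) x)
    (hv : ∀ x y, v x = v y + ∫ t in y..x, q t * u t)
    (s t : ℝ) (hst : s ≤ t) (hpos : ∀ x ∈ Set.Icc s t, 0 < u x) :
    IntervalIntegrable (fun x => (v x / u x)^2) volume s t ∧
    v t / u t - v s / u s = (∫ x in s..t, q x) - ∫ x in s..t, (v x / u x)^2 := by
  have huc : Continuous u := continuous_iff_continuousAt.2 fun x => (hu x).continuousAt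
  have hqu : ∀ x y, IntervalIntegrable (fun t => q t * u t) volume x y := fun x y =>
    (hq x y).mul_continuousOn huc.continuousOn
  have hvc : Continuous v := by
    have h1 : v = fun x => v s + ∫ t in s..x, q t * u t := funext fun x => hv x s
    rw [h1]
    exact continuous_const.add (intervalIntegral.continuous_primitive hqu s)
  have hderiv : deriv u = v := funext fun x => (hu x).deriv
  have hucd : ContDiff ℝ 1 u := by
    rw [contDiff_one_iff_deriv]
    exact ⟨fun x => (hu x).differentiableAt, by rw [hderiv]; exact hvc⟩
  have hIcc : Set.uIcc s t = Set.Icc s t := Set.uIcc_of_le hst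
  have hne : ∀ x ∈ Set.Icc s t, u x ≠ 0 := fun x hx => (hpos x hx).ne'
  have hac1 : AbsolutelyContinuousOnInterval (fun x => (u x)⁻¹) s t := by
    apply ContDiffOn.absolutelyContinuousOnInterval
    rw [hIcc]
    exact hucd.contDiffOn.inv hne
  have hac2 : AbsolutelyContinuousOnInterval v s t := by
    have h1 : v = fun x => v s + ∫ t in s..x, q t * u t := funext fun x => hv x s
    rw [h1]
    have hc : AbsolutelyContinuousOnInterval (fun _ : ℝ => v s) s t :=
      (contDiff_const.contDiffOn (𝕜 := ℝ) (n := 1)).absolutelyContinuousOnInterval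
    exact hc.fun_add ((hqu s t).absolutelyContinuousOnInterval_intervalIntegral (by simp))
  have hdv : ∀ᵐ x, x ∈ Set.uIcc s t → HasDerivAt v (q x * u x) x := by
    filter_upwards [(hqu s t).ae_hasDerivAt_integral] with x hx hx2
    have h2 := (hx hx2 s (by simp)).const_add (v s)
    have h1 : v = fun x => v s + ∫ t in s..x, q t * u t := funext fun x => hv x s
    rw [h1]
    exact h2
  have hint : IntervalIntegrable (fun x => (v x / u x)^2) volume s t := by
    apply ContinuousOn.intervalIntegrable
    rw [hIcc]
    exact (hvc.continuousOn.div huc.continuousOn hne).pow 2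
  refine ⟨hint, ?_⟩
  rw [← intervalIntegral.integral_sub (hq s t) hint]
  have := hac2.integral_deriv_mul_eq_sub hac1
  rw [div_eq_mul_inv, div_eq_mul_inv, ← this]
  apply intervalIntegral.integral_congr_ae
  filter_upwards [hdv] with x hx hx2
  have hx3 := Set.uIoc_subset_uIcc hx2
  have hx4 := hne x (hIcc ▸ hx3)
  rw [(hx hx3).deriv, ((hu x).fun_inv hx4).deriv]
  field_simp
  ring

theorem ivt_aux (φ : ℝ → ℝ) (hφ : Continuous φ) (α β p r : ℝ) (hαβ : α < β) (hpr : p ≤ r)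
    (hp : φ p ≤ α) (hr : β ≤ φ r) :
    ∃ s t, p ≤ s ∧ s ≤ t ∧ t ≤ r ∧ φ s = α ∧ φ t = β ∧ ∀ x ∈ Set.Icc s t, α ≤ φ x ∧ φ x ≤ β := by
  have hc1 : IsCompact (Set.Icc p r ∩ φ ⁻¹' {β}) :=
    isCompact_Icc.inter_right ((isClosed_singleton).preimage hφ)
  obtain ⟨t0, ht0, ht0'⟩ := intermediate_value_Icc hpr hφ.continuousOn
    (show β ∈ Set.Icc (φ p) (φ r) from ⟨by linarith, hr⟩)
  obtain ⟨t, ⟨⟨hpt, htr⟩, htβ⟩, htmin⟩ := hc1.exists_isLeast ⟨t0, ht0, ht0'⟩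
  simp only [Set.mem_preimage, Set.mem_singleton_iff] at htβ
  have hc2 : IsCompact (Set.Icc p t ∩ φ ⁻¹' {α}) :=
    isCompact_Icc.inter_right ((isClosed_singleton).preimage hφ)
  obtain ⟨s0, hs0, hs0'⟩ := intermediate_value_Icc hpt hφ.continuousOn
    (show α ∈ Set.Icc (φ p) (φ t) from ⟨hp, by linarith⟩)
  obtain ⟨s, ⟨⟨hps, hst⟩, hsα⟩, hsmax⟩ := hc2.exists_isGreatest ⟨s0, hs0, hs0'⟩
  simp only [Set.mem_preimage, Set.mem_singleton_iff] at hsα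
  refine ⟨s, t, hps, hst, htr, hsα, htβ, fun x hx => ⟨?_, ?_⟩⟩
  · by_contra! h
    obtain ⟨y, hy, hy'⟩ := intermediate_value_Icc hx.2 hφ.continuousOn
      (show α ∈ Set.Icc (φ x) (φ t) from ⟨h.le, by linarith⟩)
    have := hsmax ⟨⟨by linarith [hx.1, hy.1], hy.2⟩, hy'⟩
    have : x = s := by linarith [hx.1, hy.1]
    subst this; linarith
  · by_contra! h
    obtain ⟨y, hy, hy'⟩ := intermediate_value_Icc hx.1 hφ.continuousOn
      (show β ∈ Set.Icc (φ s) (φ x) from ⟨by linarith, h.le⟩)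
    have := htmin ⟨⟨by linarith [hy.1], by linarith [hx.2, hy.2]⟩, hy'⟩
    have : x = t := by linarith [hx.2, hy.2]
    subst this; linarith

theorem mass_aux (f : ℝ → ℝ) (a b : ℝ) (hf : ∀ x y, IntervalIntegrable f volume x y)
    (h0 : ∀ x, 0 ≤ f x)
    (hfpos : ∀ᵐ x ∂volume, x ∈ Set.Icc a b → 0 < f x) (d : ℝ) (hd : 0 < d) :
    ∃ m > 0, ∀ s t, a ≤ s → t ≤ b → d ≤ t - s → m ≤ ∫ x in s..t, f x := by
  by_cases hdb : b - d < a
  · exact ⟨1, one_pos, fun s t h1 h2 h3 => by linarith⟩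
  push Not at hdb
  have hcont : Continuous fun s => ∫ x in s..(s+d), f x := by
    have hp := intervalIntegral.continuous_primitive hf a
    have : (fun s => ∫ x in s..(s+d), f x) =
        fun s => (∫ x in a..(s+d), f x) - ∫ x in a..s, f x := by
      funext s
      rw [intervalIntegral.integral_interval_sub_left (hf _ _) (hf _ _)]
    rw [this]
    exact (hp.comp (continuous_id.add continuous_const)).sub hp
  obtain ⟨s0, hs0, hmin⟩ := isCompact_Icc.exists_isMinOn (Set.nonempty_Icc.2 hdb) hcont.continuousOn
  refine ⟨∫ x in s0..(s0+d), f x, ?_, ?_⟩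
  · rw [gt_iff_lt, intervalIntegral.integral_pos_iff_support_of_nonneg_ae (ae_of_all _ h0) (hf _ _)]
    refine ⟨by linarith, ?_⟩
    have : volume (Set.Ioc s0 (s0+d)) ≤ volume (Function.support f ∩ Set.Ioc s0 (s0+d)) := by
      apply measure_mono_ae
      filter_upwards [hfpos] with x hx hx2
      exact ⟨(hx ⟨by linarith [hx2.1, hs0.1], by linarith [hx2.2, hs0.2]⟩).ne', hx2⟩
    refine lt_of_lt_of_le ?_ this
    simp [hd]
  · intro s t h1 h2 h3
    have h4 : (∫ x in s0..(s0+d), f x) ≤ ∫ x in s..(s+d), f x :=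
      isMinOn_iff.1 hmin s ⟨h1, by linarith⟩
    have h5 := intervalIntegral.integral_add_adjacent_intervals (hf s (s+d)) (hf (s+d) t)
    have h6 : 0 ≤ ∫ x in (s+d)..t, f x :=
      intervalIntegral.integral_nonneg (by linarith) fun x _ => h0 x
    linarith

theorem sin_band (α β x : ℝ) (h0 : 0 < α) (hβ : β < Real.pi) (h1 : α ≤ x) (h2 : x ≤ β) :
    0 < min (Real.sin α) (Real.sin β) ∧ min (Real.sin α) (Real.sin β) ≤ Real.sin x := by
  refine ⟨lt_min (Real.sin_pos_of_pos_of_lt_pi h0 (by linarith))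
    (Real.sin_pos_of_pos_of_lt_pi (by linarith) hβ), ?_⟩
  exact strictConcaveOn_sin_Icc.concaveOn.min_le_of_mem_Icc ⟨h0.le, by linarith⟩
    ⟨by linarith, hβ.le⟩ ⟨h1, h2⟩

theorem cot_band (μ x : ℝ) (h0 : 0 < μ) (h : μ ≤ Real.sin x) :
    |Real.cos x / Real.sin x| ≤ 1 / μ := by
  rw [abs_div, abs_of_pos (lt_of_lt_of_le h0 h)]
  exact div_le_div₀ zero_le_one (Real.abs_cos_le_one x) h0 h

theorem cot_anti (α β : ℝ) (h0 : 0 < α) (h : α < β) (hβ : β < Real.pi) :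
    0 < Real.cos α / Real.sin α - Real.cos β / Real.sin β := by
  have h1 := Real.sin_pos_of_pos_of_lt_pi h0 (by linarith)
  have h2 := Real.sin_pos_of_pos_of_lt_pi (h0.trans h) hβ
  have h3 := Real.sin_pos_of_pos_of_lt_pi (sub_pos.2 h) (by linarith)
  rw [Real.sin_sub] at h3
  rw [div_sub_div _ _ h1.ne' h2.ne']
  apply div_pos _ (mul_pos h1 h2)
  linarith

theorem band_aux (g f : ℝ → ℝ) (Cg : ℝ) (hgb : ∀ x, |g x| ≤ Cg)
    (hg : ∀ x y, IntervalIntegrable g volume x y) (hf : ∀ x y, IntervalIntegrable f volume x y)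
    (u v R φ : ℝ → ℝ) (lam : ℝ)
    (hu : ∀ x, HasDerivAt u (v x) x)
    (hv : ∀ x y, v x = v y + ∫ t in y..x, (g t + lam * f t) * u t)
    (hR : ∀ x, 0 < R x)
    (huR : ∀ x, u x = R x * Real.sin (φ x)) (hvR : ∀ x, v x = R x * Real.cos (φ x))
    (μ : ℝ) (hμ : 0 < μ) (s t : ℝ) (hst : s ≤ t)
    (hb : ∀ x ∈ Set.Icc s t, μ ≤ Real.sin (φ x)) :
    lam * (∫ x in s..t, f x) - (Cg + (1/μ)^2) * (t - s) ≤
      Real.cos (φ t) / Real.sin (φ t) - Real.cos (φ s) / Real.sin (φ s) := by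
  have hvu : ∀ x, v x / u x = Real.cos (φ x) / Real.sin (φ x) := fun x => by
    rw [hvR, huR, mul_div_mul_left _ _ (hR x).ne']
  obtain ⟨hi, h⟩ := ric_aux (fun x => g x + lam * f x) u v
    (fun x y => (hg x y).add ((hf x y).const_mul lam)) hu hv s t hst
    (fun x hx => by rw [huR]; exact mul_pos (hR x) (lt_of_lt_of_le hμ (hb x hx)))
  rw [hvu, hvu, intervalIntegral.integral_add (hg s t) ((hf s t).const_mul lam),
    intervalIntegral.integral_const_mul] at h
  have h1 : (∫ x in s..t, -Cg) ≤ ∫ x in s..t, g x :=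
    intervalIntegral.integral_mono_on hst (by simp) (hg s t) fun x _ => (abs_le.1 (hgb x)).1
  have h2 : (∫ x in s..t, (v x / u x)^2) ≤ ∫ x in s..t, (1/μ)^2 :=
    intervalIntegral.integral_mono_on hst hi (by simp) fun x hx => by
      rw [hvu]
      exact sq_le_sq' (abs_le.1 (cot_band μ _ hμ (hb x hx))).1
        (abs_le.1 (cot_band μ _ hμ (hb x hx))).2
  rw [intervalIntegral.integral_const, smul_eq_mul] at h1 h2
  rw [h]
  linarith

theorem noclimb_aux (g f : ℝ → ℝ) (Cg : ℝ) (hgb : ∀ x, |g x| ≤ Cg)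
    (hg : ∀ x y, IntervalIntegrable g volume x y) (hf : ∀ x y, IntervalIntegrable f volume x y)
    (h0 : ∀ x, 0 ≤ f x) (a b : ℝ) (hab : b - a ≤ 1)
    (hfpos : ∀ᵐ x ∂volume, x ∈ Set.Icc a b → 0 < f x)
    (u v R φ : ℝ → ℝ → ℝ)
    (hu : ∀ (lam : ℝ) (x : ℝ), HasDerivAt (fun s => u s lam) (v x lam) x)
    (hv : ∀ (lam : ℝ) (x y : ℝ),
      v x lam = v y lam + ∫ t in y..x, (g t + lam * f t) * u t lam)
    (hR : ∀ x lam : ℝ, 0 < R x lam)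
    (hφc : ∀ lam : ℝ, Continuous fun x => φ x lam)
    (huR : ∀ x lam : ℝ, u x lam = R x lam * Real.sin (φ x lam))
    (hvR : ∀ x lam : ℝ, v x lam = R x lam * Real.cos (φ x lam))
    (α β : ℝ) (hα : 0 < α) (hαβ : α < β) (hβ : β < Real.pi) :
    ∃ Λ > 0, ∀ lam, Λ ≤ lam → ∀ p r, a ≤ p → p ≤ r → r ≤ b → φ p lam ≤ α → φ r lam < β := by
  have hμ := (sin_band α β α hα hβ le_rfl hαβ.le).1
  set μ := min (Real.sin α) (Real.sin β) with hμd
  have hκ := cot_anti α β hα hαβ hβ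
  set κ := Real.cos α / Real.sin α - Real.cos β / Real.sin β with hκd
  have hCg : 0 ≤ Cg := (abs_nonneg _).trans (hgb 0)
  have hL : 0 < Cg + (1/μ)^2 := by positivity
  set L := Cg + (1/μ)^2 with hLd
  obtain ⟨m, hm, hm'⟩ := mass_aux f a b hf h0 hfpos (κ / L) (by positivity)
  refine ⟨L / m, by positivity, fun lam hlam p r hap hpr hrb hp => ?_⟩
  by_contra! hr
  have hlam0 : 0 < lam := lt_of_lt_of_le (by positivity) hlam
  obtain ⟨s, t, hps, hst, htr, hs, ht, hband⟩ :=
    ivt_aux (fun x => φ x lam) (hφc lam) α β p r hαβ hpr hp hr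
  have key := band_aux g f Cg hgb hg hf (fun x => u x lam) (fun x => v x lam) (fun x => R x lam)
    (fun x => φ x lam) lam (hu lam) (hv lam) (fun x => hR x lam) (fun x => huR x lam)
    (fun x => hvR x lam) μ hμ s t hst
    (fun x hx => (sin_band α β _ hα hβ (hband x hx).1 (hband x hx).2).2)
  simp only [hs, ht] at key
  have hfn : 0 ≤ ∫ x in s..t, f x := intervalIntegral.integral_nonneg hst fun x _ => h0 x
  have h1 : κ ≤ L * (t - s) := by
    have := mul_nonneg hlam0.le hfn
    linarith
  have h2 := hm' s t (by linarith) (by linarith) (by rw [div_le_iff₀ hL]; linarith)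
  have h3 : L ≤ lam * m := by rwa [div_le_iff₀ hm] at hlam
  have h4 : lam * m ≤ lam * ∫ x in s..t, f x := mul_le_mul_of_nonneg_left h2 hlam0.le
  have h5 : L * (t - s) ≤ L * 1 := mul_le_mul_of_nonneg_left (by linarith) hL.le
  linarith

/-- For `N_λ = {x ∈ [a,b] : φ(x,λ) ≥ π/4}`: (i) `|N_λ| → 0` as `λ → ∞`, and
(ii) `sup_{λ>0} λ ∫_{N_λ} f < ∞`. -/
theorem prufer_phase_exceptional_set (g f : ℝ → ℝ)
    (hgm : Measurable g) (hgb : ∃ Cg : ℝ, ∀ x : ℝ, |g x| ≤ Cg)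
    (a b : ℝ) (ha : -1 ≤ a) (hab : a < b) (hb : b ≤ 0)
    (hfm : Measurable f) (C : ℝ)
    (hf : ∀ x : ℝ, 0 ≤ f x ∧ f x ≤ C)
    (hfpos : ∀ᵐ x ∂volume, x ∈ Set.Icc a b → 0 < f x)
    (hfzero : ∀ x : ℝ, x ∉ Set.Icc a b → f x = 0)
    (θ : ℝ) (hθ0 : 0 ≤ θ) (hθπ : θ < Real.pi)
    (u v R φ : ℝ → ℝ → ℝ)
    (hu : ∀ (lam : ℝ) (x : ℝ), HasDerivAt (fun s => u s lam) (v x lam) x)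
    (hv : ∀ (lam : ℝ) (x y : ℝ),
      v x lam = v y lam + ∫ t in y..x, (g t + lam * f t) * u t lam)
    (hu0 : ∀ lam : ℝ, u a lam = Real.sin θ)
    (hv0 : ∀ lam : ℝ, v a lam = Real.cos θ)
    (hR : ∀ x lam : ℝ, 0 < R x lam)
    (hφc : ∀ lam : ℝ, Continuous fun x => φ x lam)
    (huR : ∀ x lam : ℝ, u x lam = R x lam * Real.sin (φ x lam))
    (hvR : ∀ x lam : ℝ, v x lam = R x lam * Real.cos (φ x lam))
    (hφ0 : ∀ lam : ℝ, φ a lam = θ) :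
    Tendsto (fun lam : ℝ =>
        volume {x | x ∈ Set.Icc a b ∧ Real.pi / 4 ≤ φ x lam}) atTop (nhds 0) ∧
    ∃ B : ℝ, ∀ lam : ℝ, 0 < lam →
      lam * ∫ x in {x | x ∈ Set.Icc a b ∧ Real.pi / 4 ≤ φ x lam}, f x ≤ B := by
  obtain ⟨Cg, hCg⟩ := hgb
  have h0 : ∀ x, 0 ≤ f x := fun x => (hf x).1
  have hfi : ∀ x y, IntervalIntegrable f volume x y := fun x y =>
    (intervalIntegrable_const (c := C)).mono_fun hfm.aestronglyMeasurable
      (ae_of_all _ fun x => by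
        show |f x| ≤ |C|
        rw [abs_of_nonneg (h0 x)]
        exact (hf x).2.trans (le_abs_self C))
  have hgi : ∀ x y, IntervalIntegrable g volume x y := fun x y =>
    (intervalIntegrable_const (c := Cg)).mono_fun hgm.aestronglyMeasurable
      (ae_of_all _ fun x => by
        exact (hCg x).trans (le_abs_self Cg))
  have hC0 : 0 ≤ C := (h0 0).trans (hf 0).2
  have hCg0 : 0 ≤ Cg := (abs_nonneg _).trans (hCg 0)
  have hpi := Real.pi_pos
  have hcore : ∃ Λ > 0, ∃ B : ℝ, 0 ≤ B ∧ ∀ lam, Λ ≤ lam → ∀ x ∈ Set.Icc a b,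
      Real.pi / 4 ≤ φ x lam → lam * ∫ y in a..x, f y ≤ B := by
    obtain ⟨Λ1, hΛ1, H1⟩ := noclimb_aux g f Cg hCg hgi hfi h0 a b (by linarith) hfpos u v R φ hu hv
      hR hφc huR hvR (Real.pi / 8) (Real.pi / 4) (by linarith) (by linarith) (by linarith)
    set γ := max θ (Real.pi / 8) with hγ
    have hγ1 : γ < Real.pi := max_lt hθπ (by linarith)
    have hγ2 : θ ≤ γ := le_max_left _ _
    have hγ3 : Real.pi / 8 ≤ γ := le_max_right _ _
    set β := (γ + Real.pi) / 2 with hβ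
    have hβπ : β < Real.pi := by linarith
    obtain ⟨Λ2, hΛ2, H2⟩ := noclimb_aux g f Cg hCg hgi hfi h0 a b (by linarith) hfpos u v R φ hu hv
      hR hφc huR hvR γ β (by linarith) (by linarith) hβπ
    have hα0 : 0 < Real.pi / 8 := by linarith
    have hμ := (sin_band (Real.pi / 8) β β hα0 hβπ (by linarith) le_rfl).1
    set μ := min (Real.sin (Real.pi / 8)) (Real.sin β) with hμd
    refine ⟨max Λ1 Λ2, lt_max_of_lt_left hΛ1, 1/μ + 1/μ + (Cg + (1/μ)^2), by positivity,
      fun lam hlam x hx hφx => ?_⟩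
    have hband : ∀ y ∈ Set.Icc a x, μ ≤ Real.sin (φ y lam) := by
      intro y hy
      refine (sin_band (Real.pi / 8) β _ hα0 hβπ ?_ ?_).2
      · by_contra! h
        have := H1 lam ((le_max_left _ _).trans hlam) y x hy.1 hy.2 hx.2 h.le
        linarith
      · exact (H2 lam ((le_max_right _ _).trans hlam) a y le_rfl hy.1 (hy.2.trans hx.2)
          (by rw [hφ0]; exact hγ2)).le
    have key := band_aux g f Cg hCg hgi hfi (fun x => u x lam) (fun x => v x lam)
      (fun x => R x lam) (fun x => φ x lam) lam (hu lam) (hv lam) (fun x => hR x lam)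
      (fun x => huR x lam) (fun x => hvR x lam) μ hμ a x hx.1 hband
    have k1 := (abs_le.1 (cot_band μ _ hμ (hband x ⟨hx.1, le_rfl⟩))).2
    have k2 := (abs_le.1 (cot_band μ _ hμ (hband a ⟨le_rfl, hx.1⟩))).1
    have k3 : (Cg + (1/μ)^2) * (x - a) ≤ (Cg + (1/μ)^2) * 1 :=
      mul_le_mul_of_nonneg_left (by linarith [hx.2]) (by positivity)
    linarith
  obtain ⟨Λ, hΛ, B, hB, hcore⟩ := hcore
  constructor
  · rw [ENNReal.tendsto_nhds_zero]
    intro ε hε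
    obtain ⟨η, hη, hηε⟩ : ∃ η : ℝ, 0 < η ∧ ENNReal.ofReal η ≤ ε := by
      rcases eq_or_ne ε ⊤ with h | h
      · exact ⟨1, one_pos, by simp [h]⟩
      · exact ⟨ε.toReal, ENNReal.toReal_pos hε.ne' h, by rw [ENNReal.ofReal_toReal h]⟩
    obtain ⟨m, hm, hm'⟩ := mass_aux f a b hfi h0 hfpos η hη
    filter_upwards [eventually_ge_atTop Λ, eventually_gt_atTop (B / m)] with lam hl1 hl2
    refine le_trans ?_ hηε
    have hsub : {x | x ∈ Set.Icc a b ∧ Real.pi / 4 ≤ φ x lam} ⊆ Set.Icc a (a + η) := by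
      rintro x ⟨hx, hφx⟩
      refine ⟨hx.1, ?_⟩
      by_contra! h
      have k1 := hcore lam hl1 x hx hφx
      have k2 := hm' a x le_rfl hx.2 (by linarith)
      have k3 := mul_le_mul_of_nonneg_left k2 (hΛ.le.trans hl1)
      rw [div_lt_iff₀ hm] at hl2
      linarith
    refine (measure_mono hsub).trans ?_
    rw [Real.volume_Icc]
    simp
  · have hgen : ∀ lam, 0 < lam → ∀ x ∈ Set.Icc a b,
        ({x | x ∈ Set.Icc a b ∧ Real.pi / 4 ≤ φ x lam} ⊆ Set.Icc a x) →
        (∫ y in {x | x ∈ Set.Icc a b ∧ Real.pi / 4 ≤ φ x lam}, f y) ≤ ∫ y in a..x, f y := by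
      intro lam hl x hx hsub
      rw [intervalIntegral.integral_of_le hx.1, ← integral_Icc_eq_integral_Ioc]
      refine setIntegral_mono_set ?_ (ae_of_all _ h0) (ae_of_all _ hsub)
      exact (intervalIntegrable_iff_integrableOn_Icc_of_le hx.1).1 (hfi a x)
    refine ⟨max B (Λ * ∫ y in a..b, f y), fun lam hl => ?_⟩
    have hb0 : 0 ≤ ∫ y in a..b, f y := intervalIntegral.integral_nonneg hab.le fun x _ => h0 x
    rcases le_total lam Λ with h | h
    · refine le_trans ?_ (le_max_right _ _)
      have := hgen lam hl b ⟨hab.le, le_rfl⟩ (fun x hx => hx.1)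
      exact (mul_le_mul_of_nonneg_left this hl.le).trans (mul_le_mul_of_nonneg_right h hb0)
    · refine le_trans ?_ (le_max_left _ _)
      have hc : IsCompact {x | x ∈ Set.Icc a b ∧ Real.pi / 4 ≤ φ x lam} :=
        isCompact_Icc.inter_right (isClosed_le continuous_const (hφc lam))
      rcases Set.eq_empty_or_nonempty {x | x ∈ Set.Icc a b ∧ Real.pi / 4 ≤ φ x lam} with he | hne
      · rw [he]; simpa using hB
      · obtain ⟨x, hx, hmax⟩ := hc.exists_isGreatest hne
        have := hgen lam hl x hx.1 (fun y hy => ⟨hy.1.1, hmax hy⟩)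
        exact (mul_le_mul_of_nonneg_left this hl.le).trans (hcore lam h x hx.1 hx.2)
end
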